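/- arXiv:2002.06613 — 6 statements merged into one kernel-verified Lean document; each statement's English description precedes it below -/
import Mathlib

section
/- Consider the linear system with multiplicative noise x_{t+1} = (A + Ā_t) x_t + (B + B̄_t) u_t, where x_t ∈ ℝ^n, u_t ∈ ℝ^m are square-integrable random vectors, A ∈ ℝ^{n×n}, B ∈ ℝ^{n×m} are fixed matrices, and Ā_t ∈ ℝ^{n×n}, B̄_t ∈ ℝ^{n×m} are square-integrable random matrices with E[Ā_t] = 0, E[B̄_t] = 0, such that Ā_t and B̄_t are independent of each other and the pair (Ā_t, B̄_t) is independent of the pair (x_t, u_t). Let Σ_A' := E[Ā_t ⊗ Ā_t] ∈ ℝ^{n²×n²} and Σ_B' := E[B̄_t ⊗ B̄_t] ∈ ℝ^{n²×m²}. Then the vectorized second-moment dynamics hold: vec(E[x_{t+1} x_{t+1}^T]) = (A ⊗ A + Σ_A') vec(E[x_t x_t^T]) + (B ⊗ B + Σ_B') vec(E[u_t u_t^T]) + (B ⊗ A) vec(E[x_t u_t^T]) + (A ⊗ B) vec(E[u_t x_t^T]). -/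
open Matrix MeasureTheory ProbabilityTheory
open scoped Kronecker

theorem gen_aux {Ω : Type*} [MeasureSpace Ω]
    [IsProbabilityMeasure (volume : Measure Ω)] {ι κ : Type*} [Fintype κ]
    (C : ι → κ → ℝ) (N : Ω → ι → κ → ℝ) (z : Ω → κ → ℝ)
    (hz : ∀ i, MemLp (fun ω => z ω i) 2)
    (hN : ∀ i j, MemLp (fun ω => N ω i j) 2)
    (hN0 : ∀ i j, (∫ ω, N ω i j) = 0)
    (hind : IndepFun N z) (i j : ι) :
    ∫ ω, (∑ k, (C i k + N ω i k) * z ω k) * (∑ l, (C j l + N ω j l) * z ω l) =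
      ∑ k, ∑ l, (C i k * C j l + ∫ ω, N ω i k * N ω j l) * ∫ ω, z ω k * z ω l := by
  have hM : ∀ i k, MemLp (fun ω => C i k + N ω i k) 2 := fun i k =>
    (memLp_const (C i k)).add (hN i k)
  have hMM : ∀ k l, Integrable (fun ω => (C i k + N ω i k) * (C j l + N ω j l)) := fun k l =>
    (hM i k).integrable_mul (hM j l)
  have hzz : ∀ k l, Integrable (fun ω => z ω k * z ω l) := fun k l =>
    (hz k).integrable_mul (hz l)
  have hI : ∀ k l, IndepFun (fun ω => (C i k + N ω i k) * (C j l + N ω j l))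
      (fun ω => z ω k * z ω l) := fun k l =>
    hind.comp (φ := fun F : ι → κ → ℝ => (C i k + F i k) * (C j l + F j l))
      (ψ := fun y : κ → ℝ => y k * y l) (by fun_prop) (by fun_prop)
  have hint : ∀ k l, Integrable (fun ω =>
      ((C i k + N ω i k) * (C j l + N ω j l)) * (z ω k * z ω l)) := fun k l =>
    (hI k l).integrable_mul (hMM k l) (hzz k l)
  have h1 : ∀ ω, (∑ k, (C i k + N ω i k) * z ω k) * (∑ l, (C j l + N ω j l) * z ω l) =
      ∑ k, ∑ l, ((C i k + N ω i k) * (C j l + N ω j l)) * (z ω k * z ω l) := by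
    intro ω
    rw [Finset.sum_mul_sum]
    refine Finset.sum_congr rfl fun k _ => Finset.sum_congr rfl fun l _ => by ring
  simp_rw [h1]
  rw [integral_finsetSum _ fun k _ => integrable_finsetSum _ fun l _ => hint k l]
  refine Finset.sum_congr rfl fun k _ => ?_
  rw [integral_finsetSum _ fun l _ => hint k l]
  refine Finset.sum_congr rfl fun l _ => ?_
  rw [(hI k l).integral_fun_mul_eq_mul_integral (hMM k l).aestronglyMeasurable
    (hzz k l).aestronglyMeasurable]
  congr 1
  have hN1 : ∀ i j, Integrable (fun ω => N ω i j) := fun i j =>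
    (hN i j).integrable (by norm_num)
  have hNN : Integrable (fun ω => N ω i k * N ω j l) := (hN i k).integrable_mul (hN j l)
  have h2 : ∀ ω, (C i k + N ω i k) * (C j l + N ω j l) =
      C i k * C j l + (C i k * N ω j l + (C j l * N ω i k + N ω i k * N ω j l)) := by
    intro ω; ring
  simp_rw [h2]
  have i1 : Integrable (fun ω => C i k * N ω j l) := (hN1 j l).const_mul _
  have i2 : Integrable (fun ω => C j l * N ω i k) := (hN1 i k).const_mul _
  have i3 : Integrable (fun ω => C j l * N ω i k + N ω i k * N ω j l) := i2.add hNN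
  have i4 : Integrable (fun ω => C i k * N ω j l + (C j l * N ω i k + N ω i k * N ω j l)) :=
    i1.add i3
  rw [integral_add (integrable_const _) i4, integral_add i1 i3, integral_add i2 hNN,
    integral_const, integral_const_mul, integral_const_mul, hN0, hN0]
  simp

/-- Vectorized second-moment dynamics of a linear system with multiplicative noise
`x_{t+1} = (A + Ā) x + (B + B̄) u`.  Vectorizations are column-wise: a pair index `(j, i)`
stands for the linear index `(j-1)p + i`, so e.g. `vec(E[x xᵀ]) (j, i) = E[x_i x_j]`.
`Σ_A' = E[Ā ⊗ Ā]` and `Σ_B' = E[B̄ ⊗ B̄]` are taken entrywise.  The claim: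
`vec(E[x₊ x₊ᵀ]) = (A ⊗ A + Σ_A') vec(E[x xᵀ]) + (B ⊗ B + Σ_B') vec(E[u uᵀ])
  + (B ⊗ A) vec(E[x uᵀ]) + (A ⊗ B) vec(E[u xᵀ])`. -/
theorem second_moment_dynamics {Ω : Type*} [MeasureSpace Ω]
    [IsProbabilityMeasure (volume : Measure Ω)] {n m : ℕ}
    (A : Matrix (Fin n) (Fin n) ℝ) (B : Matrix (Fin n) (Fin m) ℝ)
    (x : Ω → Fin n → ℝ) (u : Ω → Fin m → ℝ)
    (Abar : Ω → Fin n → Fin n → ℝ) (Bbar : Ω → Fin n → Fin m → ℝ)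
    (hx : ∀ i, MemLp (fun ω => x ω i) 2)
    (hu : ∀ j, MemLp (fun ω => u ω j) 2)
    (hAbar : ∀ i j, MemLp (fun ω => Abar ω i j) 2)
    (hBbar : ∀ i j, MemLp (fun ω => Bbar ω i j) 2)
    (hA0 : ∀ i j, (∫ ω, Abar ω i j) = 0)
    (hB0 : ∀ i j, (∫ ω, Bbar ω i j) = 0)
    (hindepAB : IndepFun Abar Bbar)
    (hindep : IndepFun (fun ω => (Abar ω, Bbar ω)) (fun ω => (x ω, u ω))) :
    -- the next state `x₊ = (A + Ā) x + (B + B̄) u`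
    (fun p : Fin n × Fin n =>
        ∫ ω, (((A + Matrix.of (Abar ω)) *ᵥ x ω + (B + Matrix.of (Bbar ω)) *ᵥ u ω) p.2 *
              ((A + Matrix.of (Abar ω)) *ᵥ x ω + (B + Matrix.of (Bbar ω)) *ᵥ u ω) p.1)) =
      (A ⊗ₖ A + Matrix.of fun p q => ∫ ω, (Matrix.of (Abar ω) ⊗ₖ Matrix.of (Abar ω)) p q) *ᵥ
          (fun p : Fin n × Fin n => ∫ ω, x ω p.2 * x ω p.1) +
        (B ⊗ₖ B + Matrix.of fun p q => ∫ ω, (Matrix.of (Bbar ω) ⊗ₖ Matrix.of (Bbar ω)) p q) *ᵥ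
          (fun p : Fin m × Fin m => ∫ ω, u ω p.2 * u ω p.1) +
        (B ⊗ₖ A) *ᵥ (fun p : Fin m × Fin n => ∫ ω, x ω p.2 * u ω p.1) +
        (A ⊗ₖ B) *ᵥ (fun p : Fin n × Fin m => ∫ ω, u ω p.2 * x ω p.1) := by
  funext p
  obtain ⟨j, i⟩ := p
  have hAB : ∀ i j k l, (∫ ω, Abar ω i k * Bbar ω j l) = 0 := by
    intro i j k l
    have h : IndepFun (fun ω => Abar ω i k) (fun ω => Bbar ω j l) :=
      hindepAB.comp (φ := fun F : Fin n → Fin n → ℝ => F i k)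
        (ψ := fun F : Fin n → Fin m → ℝ => F j l) (by fun_prop) (by fun_prop)
    rw [h.integral_fun_mul_eq_mul_integral (hAbar i k).aestronglyMeasurable
      (hBbar j l).aestronglyMeasurable, hA0, zero_mul]
  have hBA : ∀ i j k l, (∫ ω, Bbar ω j l * Abar ω i k) = 0 := by
    intro i j k l
    rw [← hAB i j k l]
    simp_rw [mul_comm]
  have hφ : Measurable (fun P : (Fin n → Fin n → ℝ) × (Fin n → Fin m → ℝ) =>
      fun i => Sum.elim (P.1 i) (P.2 i)) := by
    refine measurable_pi_lambda _ fun i => measurable_pi_lambda _ fun k => ?_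
    cases k <;> simp only [Sum.elim_inl, Sum.elim_inr] <;> fun_prop
  have hψ : Measurable (fun P : (Fin n → ℝ) × (Fin m → ℝ) => Sum.elim P.1 P.2) := by
    refine measurable_pi_lambda _ fun k => ?_
    cases k <;> simp only [Sum.elim_inl, Sum.elim_inr] <;> fun_prop
  have key := gen_aux (fun i => Sum.elim (A i) (B i))
    (fun ω i => Sum.elim (Abar ω i) (Bbar ω i)) (fun ω => Sum.elim (x ω) (u ω))
    (by rintro (k | k); exacts [hx k, hu k])
    (by rintro i (k | k); exacts [hAbar i k, hBbar i k])
    (by rintro i (k | k); exacts [hA0 i k, hB0 i k])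
    (hindep.comp hφ hψ) i j
  simp only [Fintype.sum_sum_type, Sum.elim_inl, Sum.elim_inr, hAB, hBA, add_zero] at key
  simp only [Pi.add_apply, Matrix.mulVec, dotProduct, Matrix.add_apply, Matrix.of_apply,
    Matrix.kroneckerMap_apply, Fintype.sum_prod_type]
  rw [key]
  simp only [Finset.sum_add_distrib]
  rw [Finset.sum_comm (f := fun (k : Fin n) (l : Fin n) => _ * ∫ ω, x ω k * x ω l),
    Finset.sum_comm (f := fun (k : Fin m) (l : Fin m) => _ * ∫ ω, u ω k * u ω l),
    Finset.sum_comm (f := fun (k : Fin n) (l : Fin m) => _ * ∫ ω, x ω k * u ω l),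
    Finset.sum_comm (f := fun (k : Fin m) (l : Fin n) => _ * ∫ ω, u ω k * x ω l)]
  have c1 : ∀ k l, (∫ ω, Abar ω i k * Abar ω j l) = ∫ ω, Abar ω j l * Abar ω i k :=
    fun k l => by simp_rw [mul_comm]
  have c2 : ∀ k l, (∫ ω, Bbar ω i k * Bbar ω j l) = ∫ ω, Bbar ω j l * Bbar ω i k :=
    fun k l => by simp_rw [mul_comm]
  simp only [c1, c2, mul_comm (A i _) _, mul_comm (B i _) _]
  ring
end

section
/- Let A ∈ ℝ^{n×n}, B ∈ ℝ^{n×m} with (A, B) controllable, let μ_0 ∈ ℝ^n be fixed, and suppose ℓ > (1/2)mn² + (1/2)mn + m + 1. For inputs ν_0, …, ν_{ℓ-1} ∈ ℝ^m define μ_{t+1} = A μ_t + B ν_t for 0 ≤ t ≤ ℓ-1, and let Z ∈ ℝ^{(n+m)×ℓ} be the matrix whose t-th column (for t = 1, …, ℓ, read right to left) stacks μ_{t-1} over ν_{t-1}, i.e., Z = [[μ_{ℓ-1}, …, μ_0]; [ν_{ℓ-1}, …, ν_0]]. Then the set V := {(ν_0^T, …, ν_{ℓ-1}^T)^T ∈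 ℝ^{mℓ} : rank(Z) < n+m} has Lebesgue measure zero in ℝ^{mℓ}. -/
open Matrix MeasureTheory

/-- The first-moment trajectory `μ_{t+1} = A μ_t + B ν_t` started at `μ₀`. -/
noncomputable def traj {n m : ℕ} (A : Matrix (Fin n) (Fin n) ℝ) (B : Matrix (Fin n) (Fin m) ℝ)
    (μ0 : Fin n → ℝ) (ν : ℕ → Fin m → ℝ) : ℕ → Fin n → ℝ
  | 0 => μ0
  | t + 1 => A *ᵥ traj A B μ0 ν t + B *ᵥ ν t

/-- The controllability matrix `[B, AB, …, A^{n-1} B] ∈ ℝ^{n × nm}`. -/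
noncomputable def ctrbMat {n m : ℕ} (A : Matrix (Fin n) (Fin n) ℝ)
    (B : Matrix (Fin n) (Fin m) ℝ) : Matrix (Fin n) (Fin n × Fin m) ℝ :=
  Matrix.of fun i kj => (A ^ (kj.1 : ℕ) * B) i kj.2

/-- `(A, B)` is controllable if the controllability matrix has rank `n`. -/
def Controllable {n m : ℕ} (A : Matrix (Fin n) (Fin n) ℝ)
    (B : Matrix (Fin n) (Fin m) ℝ) : Prop :=
  (ctrbMat A B).rank = n

/-- The data matrix `Z = [[μ_{ℓ-1}, …, μ_0]; [ν_{ℓ-1}, …, ν_0]] ∈ ℝ^{(n+m) × ℓ}` regarded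
as a function of the inputs `ν_0, …, ν_{ℓ-1}`: its column `c` (columns listed left to right,
so the time index is `ℓ - 1 - c = c.rev`) stacks `μ_{ℓ-1-c}` over `ν_{ℓ-1-c}`. -/
noncomputable def Zmat {n m ℓ : ℕ} (A : Matrix (Fin n) (Fin n) ℝ)
    (B : Matrix (Fin n) (Fin m) ℝ) (μ0 : Fin n → ℝ) (ν : Fin ℓ → Fin m → ℝ) :
    Matrix (Fin n ⊕ Fin m) (Fin ℓ) ℝ :=
  Matrix.of fun r c =>
    Sum.elim
      (fun i => traj A B μ0 (fun t => if h : t < ℓ then ν ⟨t, h⟩ else 0) c.rev i)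
      (fun j => ν c.rev j) r

lemma null_of_lines {E : Type*} [NormedAddCommGroup E] [NormedSpace ℝ E] [FiniteDimensional ℝ E]
    [MeasurableSpace E] [BorelSpace E] (μ : Measure E) [μ.IsAddHaarMeasure]
    (f : E → ℝ) (hf : Continuous f) (x0 : E)
    (h : ∀ d, volume {t : ℝ | f (x0 + t • d) = 0} = 0) : μ {x | f x = 0} = 0 := by
  set S : Set E := {d | f (x0 + d) = 0} with hS
  have h1 : μ S = μ {x | f x = 0} := measure_preimage_add μ x0 {x | f x = 0}
  rw [← h1]
  have hT : MeasurableSet {p : E × ℝ | f (x0 + p.2 • p.1) = 0} := by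
    have : Continuous fun p : E × ℝ => f (x0 + p.2 • p.1) := by fun_prop
    exact (isClosed_singleton.preimage this).measurableSet
  have hT' : MeasurableSet {p : ℝ × E | f (x0 + p.1 • p.2) = 0} := by
    have : Continuous fun p : ℝ × E => f (x0 + p.1 • p.2) := by fun_prop
    exact (isClosed_singleton.preimage this).measurableSet
  have h2 : (μ.prod volume) {p : E × ℝ | f (x0 + p.2 • p.1) = 0} = 0 := by
    rw [Measure.measure_prod_null hT]
    exact Filter.Eventually.of_forall fun d => h d
  have h3 : ((volume : Measure ℝ).prod μ) {p : ℝ × E | f (x0 + p.1 • p.2) = 0} = 0 := by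
    rw [← Measure.prod_swap, Measure.map_apply measurable_swap hT']
    exact h2
  have h4 := Measure.measure_ae_null_of_prod_null h3
  have h5 : ∀ᵐ t : ℝ, t ≠ 0 := by
    simp [ae_iff]
  obtain ⟨t, ht, ht0⟩ := (h4.and h5).exists
  have h6 : μ ((fun d => t • d) ⁻¹' S) = 0 := ht
  rw [Measure.addHaar_preimage_smul μ ht0] at h6
  rcases mul_eq_zero.1 h6 with h7 | h7
  · exfalso
    rw [ENNReal.ofReal_eq_zero] at h7
    have : 0 < |(t ^ Module.finrank ℝ E)⁻¹| := by positivity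
    linarith
  · exact h7

lemma lines_null {ι κ : Type*} [Fintype ι] [DecidableEq ι] [Fintype κ]
    (M N : Matrix ι κ ℝ) (h : (M * Mᵀ).det ≠ 0) :
    volume {t : ℝ | ((M + t • N) * (M + t • N)ᵀ).det = 0} = 0 := by
  let Q : Matrix ι κ (Polynomial ℝ) := M.map Polynomial.C + (Polynomial.X : Polynomial ℝ) • N.map Polynomial.C
  let P : Polynomial ℝ := (Q * Qᵀ).det
  have hP : ∀ t : ℝ, P.eval t = ((M + t • N) * (M + t • N)ᵀ).det := by
    intro t
    have : Q.map (Polynomial.evalRingHom t) = M + t • N := by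
      ext i j; simp [Q]; ring
    rw [← Polynomial.coe_evalRingHom, RingHom.map_det, RingHom.mapMatrix_apply, Matrix.map_mul,
      Matrix.transpose_map, this]
  have hP0 : P ≠ 0 := by
    intro h0
    have := hP 0
    simp [h0] at this
    exact h this.symm
  have : {t : ℝ | ((M + t • N) * (M + t • N)ᵀ).det = 0} ⊆ (P.roots.toFinset : Set ℝ) := by
    intro t ht
    simp only [Set.mem_ofPred_eq, ← hP] at ht
    simp [hP0, ht]
  exact measure_mono_null this (Finset.measure_zero _ _)

lemma traj_line {n m : ℕ} (A : Matrix (Fin n) (Fin n) ℝ) (B : Matrix (Fin n) (Fin m) ℝ)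
    (μ0 : Fin n → ℝ) (u d : ℕ → Fin m → ℝ) (t : ℝ) (k : ℕ) :
    traj A B μ0 (u + t • d) k = traj A B μ0 u k + t • traj A B 0 d k := by
  induction k with
  | zero => simp [traj]
  | succ k ih =>
    simp only [traj, ih, Pi.add_apply, Pi.smul_apply, mulVec_add, mulVec_smul, smul_add]
    abel

lemma Zmat_line {n m ℓ : ℕ} (A : Matrix (Fin n) (Fin n) ℝ) (B : Matrix (Fin n) (Fin m) ℝ)
    (μ0 : Fin n → ℝ) (u d : Fin ℓ → Fin m → ℝ) (t : ℝ) :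
    Zmat A B μ0 (u + t • d) = Zmat A B μ0 u + t • Zmat A B 0 d := by
  have : (fun k => if h : k < ℓ then (u + t • d) ⟨k, h⟩ else 0) =
      (fun k => if h : k < ℓ then u ⟨k, h⟩ else 0) +
        t • (fun k => if h : k < ℓ then d ⟨k, h⟩ else 0) := by
    funext k
    by_cases h : k < ℓ <;> simp [h]
  ext r c
  rcases r with i | j
  · simp only [Zmat, Matrix.of_apply, Sum.elim_inl, Matrix.add_apply, Matrix.smul_apply]
    rw [this, traj_line]
    rfl
  · simp [Zmat]

lemma Zmat_cont {n m ℓ : ℕ} (A : Matrix (Fin n) (Fin n) ℝ) (B : Matrix (Fin n) (Fin m) ℝ)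
    (μ0 : Fin n → ℝ) : Continuous (Zmat (ℓ := ℓ) A B μ0) := by
  have htr : ∀ k, Continuous fun ν : Fin ℓ → Fin m → ℝ =>
      traj A B μ0 (fun t => if h : t < ℓ then ν ⟨t, h⟩ else 0) k := by
    intro k
    induction k with
    | zero => simpa [traj] using continuous_const
    | succ k ih =>
      simp only [traj]
      refine (Continuous.matrix_mulVec continuous_const ih).add
        (Continuous.matrix_mulVec continuous_const ?_)
      by_cases h : k < ℓ
      · simp only [h, dite_true]; fun_prop
      · simp only [h, dite_false]; fun_prop
  refine continuous_matrix fun r c => ?_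
  rcases r with i | j
  · exact (continuous_apply i).comp (htr c.rev)
  · simp only [Zmat, Matrix.of_apply, Sum.elim_inr]; fun_prop

/-- impulse response after one impulse at time `t + j` -/
lemma traj_impulse {n m : ℕ} (A : Matrix (Fin n) (Fin n) ℝ) (B : Matrix (Fin n) (Fin m) ℝ)
    (μ0 : Fin n → ℝ) (u : ℕ → Fin m → ℝ) (e : Fin m → ℝ) (t j K : ℕ)
    (hu : ∀ k ≤ K, u (t + k) = if k = j then e else 0) (k : ℕ) (hk : k ≤ K) :
    traj A B μ0 u (t + k) = (A ^ k) *ᵥ traj A B μ0 u t +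
      (if j < k then (A ^ (k - 1 - j)) *ᵥ (B *ᵥ e) else 0) := by
  induction k with
  | zero => simp
  | succ k ih =>
    rw [← add_assoc, traj, ih (by omega), hu k (by omega), mulVec_add, mulVec_mulVec, ← pow_succ']
    rcases lt_trichotomy j k with h | h | h
    · have h1 : k + 1 - 1 - j = (k - 1 - j) + 1 := by omega
      rw [if_pos h, if_neg (by omega), if_pos (by omega), h1, mulVec_mulVec, ← pow_succ']
      simp
    · subst h
      simp
    · rw [if_neg (by omega), if_neg (by omega), if_neg (by omega)]
      simp

lemma conv_zero (n : ℕ) (a G : ℕ → ℝ) (ha : a n = 1)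
    (h : ∀ j ≤ n, ∑ k ∈ Finset.range (n + 1), a k * (if j ≤ k then G (k - j) else 0) = 0) :
    ∀ d ≤ n, G d = 0 := by
  intro d
  induction d using Nat.strong_induction_on with
  | _ d ih =>
    intro hd
    have h1 := h (n - d) (by omega)
    rw [Finset.sum_range_succ, ha, if_pos (by omega), Finset.sum_eq_zero] at h1
    · have : n - (n - d) = d := by omega
      rw [this] at h1
      linarith
    · intro k hk
      rw [Finset.mem_range] at hk
      split_ifs with h2
      · rw [ih (k - (n - d)) (by omega) (by omega), mul_zero]
      · simp

lemma ctrb_inj {n m : ℕ} (A : Matrix (Fin n) (Fin n) ℝ) (B : Matrix (Fin n) (Fin m) ℝ)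
    (hc : Controllable A B) (p : Fin n → ℝ)
    (hp : ∀ r < n, ∀ i, p ⬝ᵥ ((A ^ r) *ᵥ (B *ᵥ Pi.single i 1)) = 0) : p = 0 := by
  have h1 : LinearIndependent ℝ (ctrbMat A B).row := by
    rw [linearIndependent_iff_card_eq_finrank_span, Set.finrank, ← Matrix.rank_eq_finrank_span_row, hc]
    simp
  have h2 := Matrix.vecMul_injective_iff.2 h1
  apply h2
  change p ᵥ* ctrbMat A B = 0 ᵥ* ctrbMat A B
  rw [Matrix.zero_vecMul]
  funext ⟨r, i⟩
  have := hp r r.2 i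
  rw [mulVec_mulVec, mulVec_single_one] at this
  exact this

lemma exists_input {n m ℓ : ℕ} (A : Matrix (Fin n) (Fin n) ℝ)
    (B : Matrix (Fin n) (Fin m) ℝ) (μ0 : Fin n → ℝ)
    (hctrb : Controllable A B) (hℓ : m * (n + 1) + n ≤ ℓ) :
    ∃ ν : Fin ℓ → Fin m → ℝ, ∀ v, v ᵥ* Zmat A B μ0 ν = 0 → v = 0 := by
  let u : ℕ → Fin m → ℝ := fun t i => if t = (i : ℕ) * (n + 1) + n then 1 else 0
  have hib : ∀ i : Fin m, (i : ℕ) * (n + 1) + (n + 1) ≤ m * (n + 1) := by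
    intro i
    have := Nat.mul_le_mul_right (n + 1) (Nat.succ_le_of_lt i.2)
    rw [Nat.succ_mul] at this
    exact this
  refine ⟨fun t => u t, fun v hv => ?_⟩
  have hu : (fun t => if h : t < ℓ then (fun t : Fin ℓ => u t) ⟨t, h⟩ else 0) = u := by
    funext t i
    by_cases h : t < ℓ
    · simp [h]
    · simp only [h, dite_false, u, Pi.zero_apply]
      rw [if_neg]
      have := hib i
      omega
  set p : Fin n → ℝ := fun i => v (Sum.inl i) with hpdef
  set q : Fin m → ℝ := fun i => v (Sum.inr i) with hqdef
  have hw : ∀ t < ℓ, p ⬝ᵥ traj A B μ0 u t + q ⬝ᵥ u t = 0 := by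
    intro t ht
    have := congrFun hv (Fin.rev ⟨t, ht⟩)
    simp only [vecMul, dotProduct, Fintype.sum_sum_type, Zmat, hu, Matrix.of_apply, Sum.elim_inl,
      Sum.elim_inr, Fin.rev_rev, Pi.zero_apply] at this
    exact this
  have key : ∀ i : Fin m, ∀ d ≤ n,
      (fun d : ℕ => if d = 0 then q i else p ⬝ᵥ ((A ^ (d - 1)) *ᵥ (B *ᵥ Pi.single i 1))) d = 0 := by
    intro i
    apply conv_zero n (fun k => A.charpoly.coeff k)
    · have := A.charpoly_monic
      rw [Polynomial.Monic, Polynomial.leadingCoeff, Matrix.charpoly_natDegree_eq_dim] at this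
      simpa using this
    intro j hj
    set t : ℕ := (i : ℕ) * (n + 1) + n - j with ht
    have hut : ∀ k ≤ n, u (t + k) = if k = j then Pi.single i 1 else 0 := by
      intro k hk
      funext i'
      simp only [u]
      by_cases hii : i' = i
      · subst hii
        by_cases hkj : k = j
        · rw [if_pos (by omega), if_pos hkj]; simp
        · rw [if_neg (by omega), if_neg hkj]; simp
      · rw [if_neg]
        · split_ifs <;> simp [hii]
        · have hne : (i' : ℕ) ≠ i := fun h => hii (Fin.ext h)
          rcases Nat.lt_or_gt_of_ne hne with h | h
          · have := Nat.mul_le_mul_right (n + 1) (Nat.succ_le_of_lt h)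
            rw [Nat.succ_mul] at this
            omega
          · have := Nat.mul_le_mul_right (n + 1) (Nat.succ_le_of_lt h)
            rw [Nat.succ_mul] at this
            omega
    have hCH : ∑ k ∈ Finset.range (n + 1),
        A.charpoly.coeff k * (p ⬝ᵥ ((A ^ k) *ᵥ traj A B μ0 u t)) = 0 := by
      have h := A.aeval_self_charpoly
      rw [Polynomial.aeval_eq_sum_range, Matrix.charpoly_natDegree_eq_dim, Fintype.card_fin] at h
      have h2 := congrArg (fun M => p ⬝ᵥ (M *ᵥ traj A B μ0 u t)) h
      simpa [Matrix.sum_mulVec, dotProduct_sum, smul_mulVec, dotProduct_smul] using h2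
    rw [← neg_eq_zero, ← Finset.sum_neg_distrib, ← hCH]
    refine Finset.sum_congr rfl fun k hk => ?_
    have hk : k ≤ n := by rw [Finset.mem_range] at hk; omega
    have h1 := hw (t + k) (by have := hib i; omega)
    rw [traj_impulse A B μ0 u (Pi.single i 1) t j n hut k hk, hut k hk, dotProduct_add] at h1
    rw [← mul_neg]
    congr 1
    rcases lt_trichotomy j k with h | h | h
    · rw [if_pos h, if_neg (by omega), dotProduct_zero] at h1
      rw [if_pos h.le, if_neg (by omega)]
      have : k - j - 1 = k - 1 - j := by omega
      rw [this]; linarith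
    · subst h
      simp at h1 ⊢
      linarith
    · rw [if_neg (by omega), if_neg (by omega), dotProduct_zero, dotProduct_zero] at h1
      rw [if_neg (by omega)]
      linarith
  have hp : p = 0 := by
    apply ctrb_inj A B hctrb
    intro r hr i
    have := key i (r + 1) (by omega)
    simpa using this
  have hq : q = 0 := by
    funext i
    simpa using key i 0 (by omega)
  funext r
  rcases r with i | i
  · exact congrFun hp i
  · exact congrFun hq i

lemma det_ne {ι κ : Type*} [Fintype ι] [DecidableEq ι] [Fintype κ]
    (M : Matrix ι κ ℝ) (h : ∀ v, v ᵥ* M = 0 → v = 0) : (M * Mᵀ).det ≠ 0 := by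
  intro h0
  obtain ⟨v, hv, hv0⟩ := Matrix.exists_vecMul_eq_zero_iff.2 h0
  apply hv
  apply h
  rw [← dotProduct_self_eq_zero]
  have := congrArg (fun w => w ⬝ᵥ v) hv0
  simp only [zero_dotProduct] at this
  rw [← vecMul_vecMul, ← dotProduct_mulVec, mulVec_transpose] at this
  exact this

/-- If `(A, B)` is controllable and `ℓ > (1/2)mn² + (1/2)mn + m + 1` (stated as
`2ℓ > mn² + mn + 2m + 2`), then the set of input sequences `(ν_0, …, ν_{ℓ-1}) ∈ ℝ^{mℓ}` for
which `Z` fails to have full row rank `n + m` has Lebesgue measure zero. -/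
theorem Zmat_rank_deficient_null {n m ℓ : ℕ} (A : Matrix (Fin n) (Fin n) ℝ)
    (B : Matrix (Fin n) (Fin m) ℝ) (μ0 : Fin n → ℝ)
    (hctrb : Controllable A B)
    (hℓ : 2 * ℓ > m * n ^ 2 + m * n + 2 * m + 2) :
    volume {ν : Fin ℓ → Fin m → ℝ | (Zmat A B μ0 ν).rank < n + m} = 0 := by

  have hl : m * (n + 1) + n ≤ ℓ := by
    rcases Nat.eq_zero_or_pos m with hm | hm
    · subst hm
      have h1 : (ctrbMat A B).rank = n := hctrb
      have h2 := Matrix.rank_le_card_width (ctrbMat A B)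
      simp at h2
      omega
    · rcases Nat.lt_or_ge n 3 with hn | hn
      · interval_cases n <;> omega
      · have h3 : m * n * 3 ≤ m * n * n := Nat.mul_le_mul_left _ hn
        have h4 : 1 * n ≤ m * n := Nat.mul_le_mul_right _ hm
        nlinarith
  obtain ⟨ν0, hν0⟩ := exists_input A B μ0 hctrb hl
  refine measure_mono_null (t := {ν | (Zmat A B μ0 ν * (Zmat A B μ0 ν)ᵀ).det = 0}) ?_ ?_
  · intro ν hν
    by_contra hne
    have h1 : IsUnit (Zmat A B μ0 ν * (Zmat A B μ0 ν)ᵀ) :=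
      (Matrix.isUnit_iff_isUnit_det _).2 (isUnit_iff_ne_zero.2 hne)
    have h2 := Matrix.rank_of_isUnit _ h1
    rw [Matrix.rank_self_mul_transpose] at h2
    simp at h2
    have h3 : (Zmat A B μ0 ν).rank < n + m := hν
    omega
  · refine null_of_lines volume (fun ν => (Zmat A B μ0 ν * (Zmat A B μ0 ν)ᵀ).det) ?_ ν0 ?_
    · have := Zmat_cont (ℓ := ℓ) A B μ0
      exact (this.matrix_mul this.matrix_transpose).matrix_det
    · intro d
      simp only [Zmat_line]
      exact lines_null _ _ (det_ne _ hν0)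
end

section
/- Let A ∈ ℝ^{n×n}, B ∈ ℝ^{n×m} with (A, B) controllable, let μ_0 ∈ ℝ^n be fixed, and suppose ℓ ≥ (1/2)mn² + (1/2)mn + m + 2. Let ν_0, …, ν_{ℓ-1} be random vectors in ℝ^m whose entries are independent, each distributed as a Gaussian with strictly positive variance. Define μ_{t+1} = A μ_t + B ν_t for 0 ≤ t ≤ ℓ-1 and let Z = [[μ_{ℓ-1}, …, μ_0]; [ν_{ℓ-1}, …, ν_0]] ∈ ℝ^{(n+m)×ℓ}. Then with probability one Z has full row rank n+m, and consequently Z Z^T is invertible with probability one. -/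
open Matrix MeasureTheory ProbabilityTheory

theorem poly_ae_ne_zero {k : ℕ} (μ : Fin k → Measure ℝ) [∀ i, IsProbabilityMeasure (μ i)]
    [∀ i, NullSingletonClass (μ i)] (p : MvPolynomial (Fin k) ℝ) (hp : p ≠ 0) :
    ∀ᵐ x ∂(Measure.pi μ), MvPolynomial.eval x p ≠ 0 := by
  induction k with
  | zero =>
    refine Filter.Eventually.of_forall fun x hx => hp ?_
    apply MvPolynomial.funext
    intro y
    rw [Subsingleton.elim y x, hx, map_zero]
  | succ k ih =>
    have hq : MvPolynomial.finSuccEquiv ℝ k p ≠ 0 := by simpa using hp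
    obtain ⟨d, hd⟩ : ∃ d, (MvPolynomial.finSuccEquiv ℝ k p).coeff d ≠ 0 := by
      by_contra! h
      exact hq (Polynomial.ext (by simpa using h))
    have h1 := ih (fun j => μ (Fin.succ j)) _ hd
    have hmp := measurePreserving_piFinSuccAbove μ 0
    have hmeas : MeasurableSet {z : ℝ × (Fin k → ℝ) |
        MvPolynomial.eval (Fin.cons z.1 z.2 : Fin (k+1) → ℝ) p ≠ 0} := by
      apply IsOpen.measurableSet
      refine isOpen_ne_fun ?_ continuous_const
      refine (MvPolynomial.continuous_eval p).comp ?_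
      refine continuous_pi fun i => ?_
      refine Fin.cases ?_ (fun j => ?_) i
      · simpa using continuous_fst
      · exact (continuous_apply j).comp continuous_snd
    have h2 : ∀ᵐ z ∂((μ 0).prod (Measure.pi fun j : Fin k => μ (Fin.succ j))),
        MvPolynomial.eval (Fin.cons z.1 z.2 : Fin (k+1) → ℝ) p ≠ 0 := by
      rw [Measure.ae_prod_iff_ae_ae hmeas, Measure.ae_ae_comm hmeas]
      filter_upwards [h1] with y hy
      have hne : Polynomial.map (MvPolynomial.eval y) (MvPolynomial.finSuccEquiv ℝ k p) ≠ 0 := by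
        intro h
        apply hy
        have := congrArg (fun q => Polynomial.coeff q d) h
        simpa using this
      have hfin := (Polynomial.map (MvPolynomial.eval y)
          (MvPolynomial.finSuccEquiv ℝ k p)).roots.toFinset.countable_toSet
      filter_upwards [hfin.ae_notMem (μ 0)] with x0 hx0 h0
      apply hx0
      rw [MvPolynomial.eval_eq_eval_mv_eval'] at h0
      simp only [Finset.mem_coe, Multiset.mem_toFinset]
      exact (Polynomial.mem_roots hne).2 h0
    have h3 := hmp.quasiMeasurePreserving.ae h2
    filter_upwards [h3] with x hx
    convert hx using 2
    refine congrArg (fun y => MvPolynomial.eval y) ?_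
    exact (Fin.cons_self_tail x).symm

theorem ctrb_zero {n m : ℕ} {A : Matrix (Fin n) (Fin n) ℝ} {B : Matrix (Fin n) (Fin m) ℝ}
    (h : Controllable A B) (ξ : Fin n → ℝ) (hξ : ∀ k : ℕ, (ξ ᵥ* A ^ k) ᵥ* B = 0) : ξ = 0 := by
  have hli : LinearIndependent ℝ (ctrbMat A B).row := by
    rw [linearIndependent_iff_card_eq_finrank_span]
    rw [Set.finrank, ← Matrix.rank_eq_finrank_span_row, Fintype.card_fin]
    exact h.symm
  have hinj := Matrix.vecMul_injective_iff.2 hli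
  apply hinj
  simp only [zero_vecMul]
  ext ⟨k, j⟩
  have := congrFun (hξ k) j
  rw [vecMul_vecMul] at this
  exact this

theorem exists_col {n m : ℕ} {A : Matrix (Fin n) (Fin n) ℝ} {B : Matrix (Fin n) (Fin m) ℝ}
    (h : Controllable A B) (μ0 : Fin n → ℝ) (ν : ℕ → Fin m → ℝ) (t : ℕ)
    (hlt : Submodule.span ℝ ((fun s => Sum.elim (traj A B μ0 ν s) (ν s)) '' Set.Iio t) ≠ ⊤) :
    ∃ u : Fin m → ℝ, Sum.elim (traj A B μ0 ν t) u ∉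
      Submodule.span ℝ ((fun s => Sum.elim (traj A B μ0 ν s) (ν s)) '' Set.Iio t) := by
  by_contra! hall
  have key : ∀ (ξ : Fin n → ℝ) (η : Fin m → ℝ),
      (∀ s < t, ξ ⬝ᵥ traj A B μ0 ν s + η ⬝ᵥ ν s = 0) → η = 0 ∧ ξ ⬝ᵥ traj A B μ0 ν t = 0 := by
    intro ξ η hs
    have hker : ∀ c ∈ Submodule.span ℝ ((fun s => Sum.elim (traj A B μ0 ν s) (ν s)) '' Set.Iio t),
        Sum.elim ξ η ⬝ᵥ c = 0 := by
      intro c hc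
      induction hc using Submodule.span_induction with
      | mem x hx =>
        obtain ⟨s, hst, rfl⟩ := hx
        simpa [sumElim_dotProduct_sumElim] using hs s hst
      | zero => simp
      | add x y _ _ hx hy => rw [dotProduct_add, hx, hy, add_zero]
      | smul a x _ hx => rw [dotProduct_smul, hx, smul_zero]
    have h0 := hker _ (hall 0)
    have h1 := hker _ (hall η)
    rw [sumElim_dotProduct_sumElim] at h0 h1
    rw [dotProduct_zero, add_zero] at h0
    rw [h0, zero_add] at h1
    exact ⟨dotProduct_self_eq_zero.1 h1, h0⟩
  have step : ∀ ξ : Fin n → ℝ, (∀ s < t, ξ ⬝ᵥ traj A B μ0 ν s = 0) →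
      ξ ᵥ* B = 0 ∧ ∀ s < t, (ξ ᵥ* A) ⬝ᵥ traj A B μ0 ν s = 0 := by
    intro ξ hs
    have ht := (key ξ 0 (by simpa using hs)).2
    have hk : ∀ s < t, (ξ ᵥ* A) ⬝ᵥ traj A B μ0 ν s + (ξ ᵥ* B) ⬝ᵥ ν s = 0 := by
      intro s hst
      have : ξ ⬝ᵥ traj A B μ0 ν (s+1) = 0 := by
        rcases Nat.lt_or_ge (s+1) t with h' | h'
        · exact hs _ h'
        · rw [show s + 1 = t by omega]; exact ht
      rw [traj, dotProduct_add, dotProduct_mulVec, dotProduct_mulVec] at this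
      exact this
    have hB := (key _ _ hk).1
    refine ⟨hB, fun s hst => ?_⟩
    have := hk s hst
    rwa [hB, zero_dotProduct, add_zero] at this
  have zero : ∀ ξ : Fin n → ℝ, (∀ s < t, ξ ⬝ᵥ traj A B μ0 ν s = 0) → ξ = 0 := by
    intro ξ hs
    have hk : ∀ k : ℕ, ∀ s < t, (ξ ᵥ* A ^ k) ⬝ᵥ traj A B μ0 ν s = 0 := by
      intro k
      induction k with
      | zero => simpa using hs
      | succ k ih =>
        rw [pow_succ, ← vecMul_vecMul]
        exact (step _ ih).2
    exact ctrb_zero h ξ fun k => (step _ (hk k)).1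
  obtain ⟨f, hf, hle⟩ := Submodule.exists_le_ker_of_lt_top _ (lt_top_iff_ne_top.2 hlt)
  obtain ⟨w, rfl⟩ := (dotProductEquiv ℝ (Fin n ⊕ Fin m)).surjective f
  apply hf
  obtain ⟨ξ, η, rfl⟩ : ∃ ξ η, w = Sum.elim ξ η := ⟨_, _, (Sum.elim_comp_inl_inr w).symm⟩
  have hs : ∀ s < t, ξ ⬝ᵥ traj A B μ0 ν s + η ⬝ᵥ ν s = 0 := by
    intro s hst
    have := hle (Submodule.subset_span ⟨s, hst, rfl⟩)
    rw [LinearMap.mem_ker] at this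
    simpa [sumElim_dotProduct_sumElim] using this
  have hη := (key ξ η hs).1
  subst hη
  have := zero ξ (by simpa using hs)
  subst this
  simp

theorem traj_congr {n m : ℕ} (A : Matrix (Fin n) (Fin n) ℝ) (B : Matrix (Fin n) (Fin m) ℝ)
    (μ0 : Fin n → ℝ) (ν ν' : ℕ → Fin m → ℝ) (t : ℕ) (h : ∀ s < t, ν s = ν' s) :
    traj A B μ0 ν t = traj A B μ0 ν' t := by
  induction t with
  | zero => rfl
  | succ t ih => rw [traj, traj, ih fun s hs => h s (by omega), h t (by omega)]

theorem exists_inputs {n m : ℕ} {A : Matrix (Fin n) (Fin n) ℝ} {B : Matrix (Fin n) (Fin m) ℝ}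
    (h : Controllable A B) (μ0 : Fin n → ℝ) (t : ℕ) :
    ∃ ν : ℕ → Fin m → ℝ, min t (n + m) ≤ Module.finrank ℝ
      (Submodule.span ℝ ((fun s => Sum.elim (traj A B μ0 ν s) (ν s)) '' Set.Iio t)) := by
  induction t with
  | zero => exact ⟨0, by simp⟩
  | succ t ih =>
    obtain ⟨ν, hν⟩ := ih
    by_cases hT : Submodule.span ℝ
        ((fun s => Sum.elim (traj A B μ0 ν s) (ν s)) '' Set.Iio t) = ⊤
    · refine ⟨ν, ?_⟩
      have : Submodule.span ℝ
        ((fun s => Sum.elim (traj A B μ0 ν s) (ν s)) '' Set.Iio (t+1)) = ⊤ := by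
        rw [eq_top_iff, ← hT]
        exact Submodule.span_mono (Set.image_mono (Set.Iio_subset_Iio (by omega)))
      rw [this, finrank_top]
      simp
    · obtain ⟨u, hu⟩ := exists_col h μ0 ν t hT
      refine ⟨Function.update ν t u, ?_⟩
      have htr : ∀ s ≤ t, traj A B μ0 (Function.update ν t u) s = traj A B μ0 ν s := by
        intro s hs
        apply traj_congr
        intro r hr
        rw [Function.update_of_ne (by omega)]
      have hlt : Submodule.span ℝ ((fun s => Sum.elim (traj A B μ0 ν s) (ν s)) '' Set.Iio t) <
          Submodule.span ℝ ((fun s => Sum.elim (traj A B μ0 (Function.update ν t u) s)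
            (Function.update ν t u s)) '' Set.Iio (t+1)) := by
        rw [SetLike.lt_iff_le_and_exists]
        constructor
        · apply Submodule.span_mono
          rintro _ ⟨s, hs, rfl⟩
          have hs' : s < t := hs
          refine ⟨s, Set.mem_Iio.2 (by omega), ?_⟩
          simp only [htr s hs'.le, Function.update_of_ne hs'.ne]
        · refine ⟨_, ?_, hu⟩
          apply Submodule.subset_span
          refine ⟨t, Set.mem_Iio.2 (by omega), ?_⟩
          simp only [htr t le_rfl, Function.update_self]
      have := Submodule.finrank_lt_finrank_of_lt hlt
      omega

theorem exists_Zmat {n m ℓ : ℕ} {A : Matrix (Fin n) (Fin n) ℝ} {B : Matrix (Fin n) (Fin m) ℝ}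
    (h : Controllable A B) (μ0 : Fin n → ℝ) (hl : n + m ≤ ℓ) :
    ∃ ν : Fin ℓ → Fin m → ℝ, (Zmat A B μ0 ν).rank = n + m := by
  obtain ⟨ν, hν⟩ := exists_inputs h μ0 ℓ
  refine ⟨fun t => ν t, le_antisymm ?_ ?_⟩
  · simpa using (Zmat A B μ0 fun t : Fin ℓ => ν t).rank_le_card_height
  · rw [min_eq_right hl] at hν
    refine hν.trans ?_
    rw [Matrix.rank_eq_finrank_span_cols]
    apply Submodule.finrank_mono
    apply Submodule.span_mono
    rintro _ ⟨s, hs, rfl⟩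
    have hs' : s < ℓ := hs
    refine ⟨(⟨s, hs'⟩ : Fin ℓ).rev, ?_⟩
    ext r
    rcases r with i | j
    · simp only [Zmat, Matrix.col_apply, Matrix.of_apply, Sum.elim_inl, Fin.rev_rev]
      refine congrFun (traj_congr _ _ _ _ _ _ ?_) i
      intro r hr
      rw [dif_pos (by omega)]
    · simp only [Zmat, Matrix.col_apply, Matrix.of_apply, Sum.elim_inr, Fin.rev_rev]

def IsMvPoly {σ : Type*} (f : (σ → ℝ) → ℝ) : Prop :=
  ∃ p : MvPolynomial σ ℝ, ∀ x, f x = MvPolynomial.eval x p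

namespace IsMvPoly
variable {σ : Type*} {f g : (σ → ℝ) → ℝ}

theorem const (c : ℝ) : IsMvPoly (fun _ : σ → ℝ => c) := ⟨MvPolynomial.C c, by simp⟩

theorem var (i : σ) : IsMvPoly (fun x : σ → ℝ => x i) := ⟨MvPolynomial.X i, by simp⟩

theorem add (hf : IsMvPoly f) (hg : IsMvPoly g) : IsMvPoly (fun x => f x + g x) := by
  obtain ⟨p, hp⟩ := hf
  obtain ⟨q, hq⟩ := hg
  exact ⟨p + q, by simp [hp, hq]⟩

theorem mul (hf : IsMvPoly f) (hg : IsMvPoly g) : IsMvPoly (fun x => f x * g x) := by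
  obtain ⟨p, hp⟩ := hf
  obtain ⟨q, hq⟩ := hg
  exact ⟨p * q, by simp [hp, hq]⟩

theorem sum {ι : Type*} (s : Finset ι) {F : ι → (σ → ℝ) → ℝ} (h : ∀ i, IsMvPoly (F i)) :
    IsMvPoly (fun x => ∑ i ∈ s, F i x) := by
  choose p hp using h
  exact ⟨∑ i ∈ s, p i, by simp [hp]⟩

theorem prod {ι : Type*} (s : Finset ι) {F : ι → (σ → ℝ) → ℝ} (h : ∀ i, IsMvPoly (F i)) :
    IsMvPoly (fun x => ∏ i ∈ s, F i x) := by
  choose p hp using h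
  exact ⟨∏ i ∈ s, p i, by simp [hp]⟩

theorem det {ι : Type*} [Fintype ι] [DecidableEq ι] {M : (σ → ℝ) → Matrix ι ι ℝ}
    (h : ∀ i j, IsMvPoly (fun x => M x i j)) : IsMvPoly (fun x => (M x).det) := by
  simp only [Matrix.det_apply']
  exact sum _ fun τ => mul (const _) (prod _ fun i => h _ _)

theorem traj {n m : ℕ} (A : Matrix (Fin n) (Fin n) ℝ) (B : Matrix (Fin n) (Fin m) ℝ)
    (μ0 : Fin n → ℝ) {ν : (σ → ℝ) → ℕ → Fin m → ℝ} (hν : ∀ t j, IsMvPoly (fun x => ν x t j))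
    (t : ℕ) (i : Fin n) : IsMvPoly (fun x => _root_.traj A B μ0 (ν x) t i) := by
  induction t generalizing i with
  | zero => exact const _
  | succ t ih =>
    simp only [_root_.traj, Pi.add_apply, Matrix.mulVec, dotProduct]
    exact add (sum _ fun j => mul (const _) (ih j)) (sum _ fun j => mul (const _) (hν t j))

end IsMvPoly

theorem isMvPoly_Zmat {σ : Type*} {n m ℓ : ℕ} (A : Matrix (Fin n) (Fin n) ℝ)
    (B : Matrix (Fin n) (Fin m) ℝ)
    (μ0 : Fin n → ℝ) (e : Fin ℓ × Fin m → σ) (r : Fin n ⊕ Fin m) (c : Fin ℓ) :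
    IsMvPoly (fun x : σ → ℝ => Zmat A B μ0 (fun t j => x (e (t, j))) r c) := by
  rcases r with i | j
  · refine IsMvPoly.traj A B μ0 (ν := fun x t => if h : t < ℓ then fun j => x (e (⟨t, h⟩, j)) else 0)
      ?_ _ i
    intro t j
    by_cases h : t < ℓ
    · simp only [h, dite_true]; exact IsMvPoly.var _
    · simp only [h, dite_false]; exact IsMvPoly.const _
  · exact IsMvPoly.var _

/-- If `(A, B)` is controllable, `ℓ ≥ (1/2)mn² + (1/2)mn + m + 2` (stated as
`2ℓ ≥ mn² + mn + 2m + 4`), and the entries of the random inputs `ν_0, …, ν_{ℓ-1} ∈ ℝ^m`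
are mutually independent Gaussian random variables with strictly positive variances, then
with probability one `Z` has full row rank `n + m`, and consequently `Z Zᵀ` is invertible
with probability one. -/
theorem Zmat_full_rank_as {Ω : Type*} [MeasureSpace Ω]
    [IsProbabilityMeasure (volume : Measure Ω)] {n m ℓ : ℕ}
    (A : Matrix (Fin n) (Fin n) ℝ) (B : Matrix (Fin n) (Fin m) ℝ) (μ0 : Fin n → ℝ)
    (hctrb : Controllable A B)
    (hℓ : 2 * ℓ ≥ m * n ^ 2 + m * n + 2 * m + 4)
    (ν : Ω → Fin ℓ → Fin m → ℝ)
    (a : Fin ℓ × Fin m → ℝ) (v : Fin ℓ × Fin m → NNReal) (hv : ∀ p, v p ≠ 0)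
    (hindep : iIndepFun (m := fun _ : Fin ℓ × Fin m => (inferInstance : MeasurableSpace ℝ))
      (fun p ω => ν ω p.1 p.2) volume)
    (hgauss : ∀ p, Measure.map (fun ω => ν ω p.1 p.2) volume = gaussianReal (a p) (v p)) :
    ∀ᵐ ω, (Zmat A B μ0 (ν ω)).rank = n + m ∧
      IsUnit (Zmat A B μ0 (ν ω) * (Zmat A B μ0 (ν ω))ᵀ) := by
  have hl : n + m ≤ ℓ := by
    rcases Nat.eq_zero_or_pos m with rfl | hm
    · have h1 : (ctrbMat A B).rank = n := hctrb
      have h2 := (ctrbMat A B).rank_le_card_width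
      simp at h2
      omega
    · nlinarith [Nat.le_mul_of_pos_left (n ^ 2) hm, Nat.le_mul_of_pos_left n hm,
        Nat.le_self_pow (two_ne_zero) n]
  have hrank : ∀ M : Matrix (Fin n ⊕ Fin m) (Fin ℓ) ℝ,
      M.rank = n + m ↔ (M * Mᵀ).det ≠ 0 := by
    intro M
    rw [← isUnit_iff_ne_zero, ← Matrix.isUnit_iff_isUnit_det]
    constructor
    · intro hM
      rw [← Matrix.linearIndependent_rows_iff_isUnit, linearIndependent_iff_card_eq_finrank_span,
        Set.finrank, ← Matrix.rank_eq_finrank_span_row, Matrix.rank_self_mul_transpose, hM]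
      simp
    · intro hM
      rw [← Matrix.rank_self_mul_transpose, Matrix.rank_of_isUnit _ hM]
      simp
  let e := Fintype.equivFin (Fin ℓ × Fin m)
  obtain ⟨p, hp⟩ : IsMvPoly (fun x : Fin (Fintype.card (Fin ℓ × Fin m)) → ℝ =>
      (Zmat A B μ0 (fun t j => x (e (t, j))) *
        (Zmat A B μ0 (fun t j => x (e (t, j))))ᵀ).det) := by
    apply IsMvPoly.det
    intro i j
    simp only [Matrix.mul_apply, Matrix.transpose_apply]
    exact IsMvPoly.sum _ fun k => IsMvPoly.mul (isMvPoly_Zmat _ _ _ _ _ _) (isMvPoly_Zmat _ _ _ _ _ _)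
  have hp0 : p ≠ 0 := by
    rintro rfl
    obtain ⟨ν', hν'⟩ := exists_Zmat hctrb μ0 hl
    apply (hrank _).1 hν'
    have := hp (fun q => ν' (e.symm q).1 (e.symm q).2)
    simpa using this
  have hmeas : ∀ q : Fin ℓ × Fin m, AEMeasurable (fun ω => ν ω q.1 q.2) volume := fun q =>
    aemeasurable_of_map_neZero (by rw [hgauss]; infer_instance)
  have hind := hindep.precomp e.symm.injective
  have hmap := hind.map_fun_eq_pi_map (fun i => hmeas (e.symm i))
  have hnull : ∀ i, NullSingletonClass (gaussianReal (a (e.symm i)) (v (e.symm i))) :=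
    fun i => nullSingletonClass_gaussianReal (hv _)
  have hae := poly_ae_ne_zero (fun i => gaussianReal (a (e.symm i)) (v (e.symm i))) p hp0
  simp only [hgauss] at hmap
  rw [← hmap] at hae
  have hae' := ae_of_ae_map (aemeasurable_pi_lambda _ fun i => hmeas (e.symm i)) hae
  filter_upwards [hae'] with ω hω
  rw [← hp] at hω
  simp only [Equiv.symm_apply_apply] at hω
  refine ⟨(hrank _).2 hω, ?_⟩
  rw [Matrix.isUnit_iff_isUnit_det, isUnit_iff_ne_zero]
  exact hω
end

section
/- Let A ∈ ℝ^{n×n}, B ∈ ℝ^{n×m} with (A, B) controllable, Ă ∈ ℝ^{N×N}, B̆ ∈ ℝ^{N×M} with (Ă, B̆) controllable, and let ℓ exceed both (1/2)mn² + (1/2)mn + m + 1 and (1/2)MN² + (1/2)MN + M + 1. Let μ_0 ∈ ℝ^n, X_0 ∈ ℝ^N be fixed. Let (ν_0, …, ν_{ℓ-1}, U_0, …, U_{ℓ-1}) be random vectors whose joint law on ℝ^{(m+M)ℓ} is absolutely continuous with respect to Lebesgue measure, and suppose the sequence η_0, …, η_{ℓ-1} ∈ ℝ^N is a measurable function of (ν_0,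 …, ν_{ℓ-1}) alone. Define μ_{t+1} = A μ_t + B ν_t, X_{t+1} = Ă X_t + B̆ U_t + η_t, Z = [[μ_{ℓ-1}, …, μ_0]; [ν_{ℓ-1}, …, ν_0]], and D = [[X_{ℓ-1}, …, X_0]; [U_{ℓ-1}, …, U_0]]. Then with probability one both Z Z^T and D D^T are invertible. -/
open Matrix MeasureTheory

/-- The second-moment trajectory `X_{t+1} = Ă X_t + B̆ U_t + η_t` started at `X₀`. -/
noncomputable def trajEta {N M : ℕ} (Ab : Matrix (Fin N) (Fin N) ℝ)
    (Bb : Matrix (Fin N) (Fin M) ℝ) (X0 : Fin N → ℝ) (U : ℕ → Fin M → ℝ)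
    (η : ℕ → Fin N → ℝ) : ℕ → Fin N → ℝ
  | 0 => X0
  | t + 1 => Ab *ᵥ trajEta Ab Bb X0 U η t + Bb *ᵥ U t + η t

/-- `D = [[X_{ℓ-1}, …, X_0]; [U_{ℓ-1}, …, U_0]] ∈ ℝ^{(N+M) × ℓ}`. -/
noncomputable def Dmat {N M ℓ : ℕ} (Ab : Matrix (Fin N) (Fin N) ℝ)
    (Bb : Matrix (Fin N) (Fin M) ℝ) (X0 : Fin N → ℝ) (η : Fin ℓ → Fin N → ℝ)
    (U : Fin ℓ → Fin M → ℝ) : Matrix (Fin N ⊕ Fin M) (Fin ℓ) ℝ :=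
  Matrix.of fun r c =>
    Sum.elim
      (fun i => trajEta Ab Bb X0 (fun t => if h : t < ℓ then U ⟨t, h⟩ else 0)
        (fun t => if h : t < ℓ then η ⟨t, h⟩ else 0) c.rev i)
      (fun j => U c.rev j) r

lemma ctrb_ker {n m : ℕ} {A : Matrix (Fin n) (Fin n) ℝ} {B : Matrix (Fin n) (Fin m) ℝ}
    (h : Controllable A B) (p : Fin n → ℝ)
    (hp : ∀ k < n, ∀ j, ((p ᵥ* A ^ k) ᵥ* B) j = 0) : p = 0 := by
  have hli : LinearIndependent ℝ (ctrbMat A B).row := by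
    rw [linearIndependent_iff_card_eq_finrank_span, Set.finrank, ← Matrix.rank_eq_finrank_span_row]
    rw [Fintype.card_fin]
    exact h.symm
  have hinj := Matrix.vecMul_injective_iff.2 hli
  apply hinj
  simp only [Matrix.zero_vecMul]
  ext kj
  have := hp kj.1 kj.1.2 kj.2
  rw [Matrix.vecMul_vecMul] at this
  exact this

lemma ch_ext {n m : ℕ} (A : Matrix (Fin n) (Fin n) ℝ) (B : Matrix (Fin n) (Fin m) ℝ)
    (p : Fin n → ℝ) (j : Fin m)
    (hp : ∀ k < n, ((p ᵥ* A ^ k) ᵥ* B) j = 0) (k : ℕ) : ((p ᵥ* A ^ k) ᵥ* B) j = 0 := by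
  rcases Nat.eq_zero_or_pos n with hn | hn
  · subst hn
    simp [Matrix.vecMul, dotProduct]
  have hdeg : (Polynomial.X ^ k %ₘ A.charpoly).natDegree < n := by
    have h1 := Polynomial.natDegree_modByMonic_lt (Polynomial.X ^ k) A.charpoly_monic
      (by
        intro h
        have h2 := A.charpoly_natDegree_eq_dim
        rw [h] at h2
        simp at h2
        omega)
    rwa [A.charpoly_natDegree_eq_dim, Fintype.card_fin] at h1
  rw [Matrix.pow_eq_aeval_mod_charpoly, Polynomial.aeval_eq_sum_range' hdeg,
    Matrix.vecMul_sum, Matrix.sum_vecMul, Finset.sum_apply]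
  apply Finset.sum_eq_zero
  intro i hi
  rw [Matrix.vecMul_smul, Matrix.smul_vecMul, Pi.smul_apply, hp i (Finset.mem_range.1 hi), smul_zero]

lemma traj_dot {N M : ℕ} (A : Matrix (Fin N) (Fin N) ℝ) (B : Matrix (Fin N) (Fin M) ℝ)
    (U : ℕ → Fin M → ℝ) (t : ℕ) : ∀ (p : Fin N → ℝ),
    p ⬝ᵥ trajEta A B 0 U 0 t =
      ∑ s ∈ Finset.range t, ((p ᵥ* A ^ (t - 1 - s)) ᵥ* B) ⬝ᵥ U s := by
  induction t with
  | zero => intro p; simp [trajEta]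
  | succ t ih =>
    intro p
    rw [Finset.sum_range_succ]
    simp only [trajEta, dotProduct_add, Matrix.dotProduct_mulVec, ih]
    simp only [Pi.zero_apply, dotProduct_zero, add_zero]
    congr 1
    · apply Finset.sum_congr rfl
      intro s hs
      have hs := Finset.mem_range.1 hs
      rw [Matrix.vecMul_vecMul p, ← pow_succ']
      congr 4
      omega
    · simp

lemma exists_full {N M ℓ : ℕ} (A : Matrix (Fin N) (Fin N) ℝ) (B : Matrix (Fin N) (Fin M) ℝ)
    (h : Controllable A B) (hℓ : (N + 1) * M ≤ ℓ) :
    ∃ W : Fin ℓ → Fin M → ℝ,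
      (Dmat A B 0 0 W * (Dmat A B 0 0 W)ᵀ).det ≠ 0 := by
  let U : ℕ → Fin M → ℝ := fun s j => if s = (N + 1) * (j : ℕ) then 1 else 0
  let W : Fin ℓ → Fin M → ℝ := fun t => U t
  have hlt : ∀ (j : Fin M) (r : ℕ), r ≤ N → (N + 1) * (j : ℕ) + r < ℓ := by
    intro j r hr
    have : (N + 1) * ((j : ℕ) + 1) ≤ (N + 1) * M := Nat.mul_le_mul_left _ j.2
    rw [Nat.mul_add] at this
    omega
  have hext : (fun t => if h : t < ℓ then W ⟨t, h⟩ else 0) = U := by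
    ext t j
    by_cases ht : t < ℓ
    · simp [ht, W]
    · have : t ≠ (N + 1) * (j : ℕ) := by
        intro h; have := hlt j 0 (Nat.zero_le _); omega
      simp [ht, U, this]
  have hext0 : (fun t => if h : t < ℓ then (0 : Fin ℓ → Fin N → ℝ) ⟨t, h⟩ else 0) = 0 := by
    ext t j
    simp
  refine ⟨W, ?_⟩
  have hker : ∀ v : Fin N ⊕ Fin M → ℝ, v ᵥ* Dmat A B 0 0 W = 0 → v = 0 := by
    intro v hv
    set p : Fin N → ℝ := fun i => v (Sum.inl i) with hp
    set q : Fin M → ℝ := fun i => v (Sum.inr i) with hq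
    have heq : ∀ t < ℓ, p ⬝ᵥ trajEta A B 0 U 0 t + q ⬝ᵥ U t = 0 := by
      intro t ht
      have := congrFun hv (Fin.rev ⟨t, ht⟩)
      simp only [Matrix.vecMul, dotProduct, Fintype.sum_sum_type, Dmat, Matrix.of_apply,
        Sum.elim_inl, Sum.elim_inr, hext, hext0, Fin.rev_rev] at this
      exact this
    have hpX : ∀ t, p ⬝ᵥ trajEta A B 0 U 0 t = ∑ j : Fin M, if (N + 1) * (j : ℕ) < t then
        ((p ᵥ* A ^ (t - 1 - (N + 1) * (j : ℕ))) ᵥ* B) j else 0 := by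
      intro t
      rw [traj_dot]
      simp only [dotProduct]
      rw [Finset.sum_comm]
      apply Finset.sum_congr rfl
      intro j _
      simp [U, Finset.sum_ite_eq']
    have hqU : ∀ (j : Fin M) (r : ℕ), r ≤ N → q ⬝ᵥ U ((N + 1) * (j : ℕ) + r) =
        if r = 0 then q j else 0 := by
      intro j r hr
      have key : ∀ i : Fin M, (N + 1) * (j : ℕ) + r = (N + 1) * (i : ℕ) ↔ (r = 0 ∧ i = j) := by
        intro i
        constructor
        · intro h
          have h1 : ((N + 1) * (j : ℕ) + r) % (N + 1) = ((N + 1) * (i : ℕ)) % (N + 1) := by rw [h]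
          rw [Nat.mul_add_mod, Nat.mul_mod_right, Nat.mod_eq_of_lt (by omega)] at h1
          refine ⟨h1, ?_⟩
          rw [h1, add_zero] at h
          exact (Fin.ext (Nat.eq_of_mul_eq_mul_left (Nat.succ_pos N) h)).symm
        · rintro ⟨rfl, rfl⟩; simp
      simp only [dotProduct, U, key]
      by_cases hr0 : r = 0 <;> simp [hr0]
    have main : ∀ (a : ℕ) (j : Fin M), (j : ℕ) = a →
        q j = 0 ∧ ∀ k, ((p ᵥ* A ^ k) ᵥ* B) j = 0 := by
      intro a
      induction a using Nat.strong_induction_on with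
      | _ a ih =>
        intro j hj
        have hX : ∀ r ≤ N, p ⬝ᵥ trajEta A B 0 U 0 ((N + 1) * (j : ℕ) + r) =
            if 0 < r then ((p ᵥ* A ^ (r - 1)) ᵥ* B) j else 0 := by
          intro r hr
          rw [hpX, Finset.sum_eq_single j]
          · have : (N + 1) * (j : ℕ) + r - 1 - (N + 1) * (j : ℕ) = r - 1 := by omega
            rw [this]
            simp
          · intro i _ hij
            rcases lt_or_ge (i : ℕ) j with h1 | h1
            · rw [(ih i (hj ▸ h1) i rfl).2, ite_self]
            · have h2 : (j : ℕ) + 1 ≤ i := by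
                have : (i : ℕ) ≠ j := fun h => hij (Fin.ext h)
                omega
              have h3 := Nat.mul_le_mul_left (N + 1) h2
              rw [Nat.mul_add] at h3
              rw [if_neg (by omega)]
          · simp
        have h0 : q j = 0 := by
          have := heq _ (hlt j 0 (Nat.zero_le _))
          rw [hX 0 (Nat.zero_le _), hqU j 0 (Nat.zero_le _)] at this
          simpa using this
        refine ⟨h0, ch_ext A B p j ?_⟩
        intro k hk
        have := heq _ (hlt j (k + 1) hk)
        rw [hX (k + 1) hk, hqU j (k + 1) hk] at this
        simpa using this
    have hp0 : p = 0 := ctrb_ker h p (fun k _ j => (main j j rfl).2 k)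
    ext x
    rcases x with i | j
    · exact congrFun hp0 i
    · exact (main j j rfl).1
  have hu : IsUnit (Dmat A B 0 0 W * (Dmat A B 0 0 W)ᵀ) := by
    rw [← Matrix.vecMul_injective_iff_isUnit]
    refine (injective_iff_map_eq_zero
      (Matrix.vecMulLinear (Dmat A B 0 0 W * (Dmat A B 0 0 W)ᵀ))).2 ?_
    intro v hv
    apply hker
    have hv' : v ᵥ* (Dmat A B 0 0 W * (Dmat A B 0 0 W)ᵀ) = 0 := hv
    rw [← dotProduct_self_eq_zero]
    nth_rewrite 2 [← Matrix.mulVec_transpose]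
    rw [Matrix.dotProduct_mulVec, Matrix.vecMul_vecMul, hv', zero_dotProduct]
  exact ((Matrix.isUnit_iff_isUnit_det _).1 hu).ne_zero

lemma trajEta_add {N M : ℕ} (A : Matrix (Fin N) (Fin N) ℝ) (B : Matrix (Fin N) (Fin M) ℝ)
    (X0 : Fin N → ℝ) (U W : ℕ → Fin M → ℝ) (η : ℕ → Fin N → ℝ) (s : ℝ) (t : ℕ) :
    trajEta A B X0 (U + s • W) η t = trajEta A B X0 U η t + s • trajEta A B 0 W 0 t := by
  induction t with
  | zero => simp [trajEta]
  | succ t ih =>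
    simp only [trajEta, ih, Matrix.mulVec_add, Matrix.mulVec_smul, Pi.add_apply, Pi.smul_apply,
      smul_add, Pi.zero_apply, add_zero]
    abel

lemma Dmat_add {N M ℓ : ℕ} (A : Matrix (Fin N) (Fin N) ℝ) (B : Matrix (Fin N) (Fin M) ℝ)
    (X0 : Fin N → ℝ) (U W : Fin ℓ → Fin M → ℝ) (η : Fin ℓ → Fin N → ℝ) (s : ℝ) :
    Dmat A B X0 η (U + s • W) = Dmat A B X0 η U + s • Dmat A B 0 0 W := by
  have h1 : (fun t => if h : t < ℓ then (U + s • W) ⟨t, h⟩ else 0) =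
      (fun t => if h : t < ℓ then U ⟨t, h⟩ else 0) +
        s • (fun t => if h : t < ℓ then W ⟨t, h⟩ else 0) := by
    ext t j
    by_cases ht : t < ℓ <;> simp [ht]
  have hext0 : (fun t => if h : t < ℓ then (0 : Fin ℓ → Fin N → ℝ) ⟨t, h⟩ else 0) = 0 := by
    ext t j
    simp
  ext r c
  rcases r with i | j
  · simp only [Dmat, Matrix.of_apply, Sum.elim_inl, Matrix.add_apply, Matrix.smul_apply]
    rw [h1, trajEta_add, hext0]
    simp
  · simp [Dmat]

lemma line_ae {ι κ : Type*} [Fintype ι] [DecidableEq ι] [Fintype κ] (C W : Matrix ι κ ℝ)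
    (hW : (W * Wᵀ).det ≠ 0) :
    ∀ᵐ s : ℝ, ((C + s • W) * (C + s • W)ᵀ).det ≠ 0 := by
  let P : Polynomial ℝ :=
    ((W.map Polynomial.C + (Polynomial.X : Polynomial ℝ) • C.map Polynomial.C) *
      (W.map Polynomial.C + (Polynomial.X : Polynomial ℝ) • C.map Polynomial.C)ᵀ).det
  have hP : ∀ x, P.eval x = ((W + x • C) * (W + x • C)ᵀ).det := by
    intro x
    simp only [P]
    rw [← Polynomial.coe_evalRingHom, RingHom.map_det]
    congr 1
    ext i j
    simp [Matrix.mul_apply, Polynomial.eval_finsetSum, mul_comm x]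
  have hP0 : P ≠ 0 := by
    intro h
    have := hP 0
    rw [h] at this
    simp at this
    exact hW this.symm
  have hfin : ({0} ∪ (fun x : ℝ => x⁻¹) '' (P.rootSet ℝ)).Finite :=
    (Set.finite_singleton _).union ((Polynomial.rootSet_finite P ℝ).image _)
  have := hfin.countable.ae_notMem (volume : Measure ℝ)
  filter_upwards [this] with s hs
  intro hdet
  apply hs
  by_cases h0 : s = 0
  · left; exact h0
  right
  refine ⟨s⁻¹, ?_, inv_inv s⟩
  rw [Polynomial.mem_rootSet]
  refine ⟨hP0, ?_⟩
  rw [Polynomial.coe_aeval_eq_eval, hP]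
  have : W + s⁻¹ • C = s⁻¹ • (C + s • W) := by
    rw [smul_add, smul_smul, inv_mul_cancel₀ h0, one_smul, add_comm]
  rw [this, Matrix.transpose_smul, Matrix.smul_mul, Matrix.mul_smul, Matrix.det_smul,
    Matrix.det_smul, hdet, mul_zero, mul_zero]

lemma meas_traj {F : Type*} [MeasurableSpace F] {N M : ℕ}
    (A : Matrix (Fin N) (Fin N) ℝ) (B : Matrix (Fin N) (Fin M) ℝ)
    (X0 : Fin N → ℝ) (U : F → ℕ → Fin M → ℝ) (η : F → ℕ → Fin N → ℝ)
    (hU : ∀ t j, Measurable fun y => U y t j) (hη : ∀ t j, Measurable fun y => η y t j) (t : ℕ) :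
    ∀ i, Measurable fun y => trajEta A B X0 (U y) (η y) t i := by
  induction t with
  | zero => intro i; simp only [trajEta]; exact measurable_const
  | succ t ih =>
    intro i
    simp only [trajEta, Pi.add_apply, Matrix.mulVec, dotProduct]
    refine ((Finset.measurable_sum _ fun k _ => ?_).add
      (Finset.measurable_sum _ fun k _ => ?_)).add (hη t i)
    · exact (ih k).const_mul _
    · exact (hU t k).const_mul _

lemma meas_Dmat {F : Type*} [MeasurableSpace F] {N M ℓ : ℕ}
    (A : Matrix (Fin N) (Fin N) ℝ) (B : Matrix (Fin N) (Fin M) ℝ)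
    (X0 : Fin N → ℝ) (U : F → Fin ℓ → Fin M → ℝ) (η : F → Fin ℓ → Fin N → ℝ)
    (hU : Measurable U) (hη : Measurable η) (r : Fin N ⊕ Fin M) (c : Fin ℓ) :
    Measurable fun y => Dmat A B X0 (η y) (U y) r c := by
  have hU' : ∀ t j, Measurable fun y => U y t j := fun t j => by fun_prop
  have hη' : ∀ t j, Measurable fun y => η y t j := fun t j => by fun_prop
  rcases r with i | j
  · simp only [Dmat, Matrix.of_apply, Sum.elim_inl]
    apply meas_traj
    · intro t j
      by_cases ht : t < ℓ
      · simpa [ht] using hU' _ _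
      · simp [ht]
    · intro t j
      by_cases ht : t < ℓ
      · simpa [ht] using hη' _ _
      · simp [ht]
  · simp only [Dmat, Matrix.of_apply, Sum.elim_inr]
    exact hU' _ _

lemma key_ae {F : Type*} [NormedAddCommGroup F] [NormedSpace ℝ F] [MeasurableSpace F]
    [BorelSpace F] [LocallyCompactSpace F] (ν : Measure F) [ν.IsAddHaarMeasure] {N M ℓ : ℕ}
    (A : Matrix (Fin N) (Fin N) ℝ) (B : Matrix (Fin N) (Fin M) ℝ) (X0 : Fin N → ℝ)
    (h : Controllable A B) (hℓ : 2 * ℓ > M * N ^ 2 + M * N + 2 * M + 2)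
    (L : F →ₗ[ℝ] (Fin ℓ → Fin M → ℝ)) (hL : Measurable L)
    (R : (Fin ℓ → Fin M → ℝ) → F) (hR : ∀ W, L (R W) = W)
    (η : F → Fin ℓ → Fin N → ℝ) (hη : Measurable η)
    (hinv : ∀ y W (s : ℝ), η (y + s • R W) = η y) :
    ∀ᵐ y ∂ν, IsUnit (Dmat A B X0 (η y) (L y) * (Dmat A B X0 (η y) (L y))ᵀ) := by
  obtain ⟨W, hW⟩ := exists_full A B h (ℓ := ℓ) (by
    have : N ≤ N ^ 2 := Nat.le_self_pow (by norm_num) N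
    have := Nat.mul_le_mul_left M this
    nlinarith)
  have hms : MeasurableSet
      {y | (Dmat A B X0 (η y) (L y) * (Dmat A B X0 (η y) (L y))ᵀ).det ≠ 0} := by
    have hm : Measurable fun y =>
        (Dmat A B X0 (η y) (L y) * (Dmat A B X0 (η y) (L y))ᵀ).det := by
      simp only [Matrix.det_apply, Matrix.mul_apply, Matrix.transpose_apply]
      refine Finset.measurable_sum _ fun σ _ => Measurable.const_smul ?_ _
      refine Finset.measurable_prod _ fun i _ => Finset.measurable_sum _ fun k _ => ?_
      exact (meas_Dmat A B X0 _ η hL hη _ _).mul (meas_Dmat A B X0 _ η hL hη _ _)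
    exact hm (measurableSet_singleton 0).compl
  have := ae_mem_of_ae_add_linearMap_mem (LinearMap.toSpanSingleton ℝ F (R W))
    (volume : Measure ℝ) ν hms (by
      intro y
      filter_upwards [line_ae (Dmat A B X0 (η y) (L y)) _ hW] with s hs
      simp only [LinearMap.toSpanSingleton_apply, hinv, map_add, map_smul, hR,
        Dmat_add]
      exact hs)
  filter_upwards [this] with y hy
  exact (Matrix.isUnit_iff_isUnit_det _).2 (isUnit_iff_ne_zero.2 hy)

lemma traj_eq {n m : ℕ} (A : Matrix (Fin n) (Fin n) ℝ) (B : Matrix (Fin n) (Fin m) ℝ)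
    (μ0 : Fin n → ℝ) (ν : ℕ → Fin m → ℝ) (t : ℕ) :
    traj A B μ0 ν t = trajEta A B μ0 ν 0 t := by
  induction t with
  | zero => rfl
  | succ t ih => simp [traj, trajEta, ih]

lemma Zmat_eq {n m ℓ : ℕ} (A : Matrix (Fin n) (Fin n) ℝ) (B : Matrix (Fin n) (Fin m) ℝ)
    (μ0 : Fin n → ℝ) (ν : Fin ℓ → Fin m → ℝ) :
    Zmat A B μ0 ν = Dmat A B μ0 0 ν := by
  have hext0 : (fun t => if h : t < ℓ then (0 : Fin ℓ → Fin n → ℝ) ⟨t, h⟩ else 0) = 0 := by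
    ext t j
    simp
  unfold Zmat Dmat
  rw [hext0]
  simp only [traj_eq]

/-- If `(A, B)` and `(Ă, B̆)` are controllable, `ℓ` exceeds both
`(1/2)mn² + (1/2)mn + m + 1` and `(1/2)MN² + (1/2)MN + M + 1` (stated multiplied by `2`),
the joint law of the random inputs `(ν_0, …, ν_{ℓ-1}, U_0, …, U_{ℓ-1})` on `ℝ^{(m+M)ℓ}` is
absolutely continuous with respect to Lebesgue measure, and the offsets `η_0, …, η_{ℓ-1}` are
a measurable function of `(ν_0, …, ν_{ℓ-1})` alone, then with probability one both `Z Zᵀ`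
and `D Dᵀ` are invertible. -/
theorem ZZt_and_DDt_invertible_as {Ω : Type*} [MeasureSpace Ω]
    [IsProbabilityMeasure (volume : Measure Ω)] {n m N M ℓ : ℕ}
    (A : Matrix (Fin n) (Fin n) ℝ) (B : Matrix (Fin n) (Fin m) ℝ)
    (Ab : Matrix (Fin N) (Fin N) ℝ) (Bb : Matrix (Fin N) (Fin M) ℝ)
    (μ0 : Fin n → ℝ) (X0 : Fin N → ℝ)
    (hctrb1 : Controllable A B) (hctrb2 : Controllable Ab Bb)
    (hℓ1 : 2 * ℓ > m * n ^ 2 + m * n + 2 * m + 2)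
    (hℓ2 : 2 * ℓ > M * N ^ 2 + M * N + 2 * M + 2)
    (V : Ω → (Fin ℓ → Fin m → ℝ) × (Fin ℓ → Fin M → ℝ)) (hVmeas : Measurable V)
    (hac : Measure.map V volume ≪
      (volume : Measure ((Fin ℓ → Fin m → ℝ) × (Fin ℓ → Fin M → ℝ))))
    (ηf : (Fin ℓ → Fin m → ℝ) → Fin ℓ → Fin N → ℝ) (hηf : Measurable ηf) :
    ∀ᵐ ω, IsUnit (Zmat A B μ0 (V ω).1 * (Zmat A B μ0 (V ω).1)ᵀ) ∧
      IsUnit (Dmat Ab Bb X0 (ηf (V ω).1) (V ω).2 *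
        (Dmat Ab Bb X0 (ηf (V ω).1) (V ω).2)ᵀ) := by
  have i1 : ∀ k : ℕ, (volume : Measure (Fin ℓ → Fin k → ℝ)).IsAddHaarMeasure := fun k =>
    Measure.pi.isAddHaarMeasure (fun _ : Fin ℓ => (volume : Measure (Fin k → ℝ)))
  have i1m := i1 m
  have i1M := i1 M
  have i2 : (volume : Measure ((Fin ℓ → Fin m → ℝ) × (Fin ℓ → Fin M → ℝ))).IsAddHaarMeasure :=
    Measure.prod.instIsAddHaarMeasure _ _
  have h1 := key_ae (volume : Measure ((Fin ℓ → Fin m → ℝ) × (Fin ℓ → Fin M → ℝ))) A B μ0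
    hctrb1 hℓ1 (LinearMap.fst ℝ _ _) measurable_fst (fun W => (W, 0)) (fun W => rfl)
    (fun _ => 0) measurable_const (fun _ _ _ => rfl)
  have h2 := key_ae (volume : Measure ((Fin ℓ → Fin m → ℝ) × (Fin ℓ → Fin M → ℝ))) Ab Bb X0
    hctrb2 hℓ2 (LinearMap.snd ℝ _ _) measurable_snd (fun W => (0, W)) (fun W => rfl)
    (fun y => ηf y.1) (hηf.comp measurable_fst) (fun y W s => by simp)
  have h3 := ae_of_ae_map hVmeas.aemeasurable (hac.ae_le (h1.and h2))
  filter_upwards [h3] with ω hω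
  rw [Zmat_eq]
  exact hω
end

section
/- Consistency of the first-stage least-squares estimator: Let A ∈ ℝ^{n×n}, B ∈ ℝ^{n×m}, fixed inputs ν_0, …, ν_{ℓ-1} ∈ ℝ^m, and let (x_0^{(k)}, …, x_ℓ^{(k)}), k = 1, 2, 3, …, be an i.i.d. sequence of ℝ^{n(ℓ+1)}-valued random vectors with E‖x_t^{(1)}‖² < ∞ for all 0 ≤ t ≤ ℓ, whose mean trajectory μ_t := E[x_t^{(1)}] satisfies μ_{t+1} = A μ_t + B ν_t for 0 ≤ t ≤ ℓ-1. Suppose Z Z^T is invertible, where Z = [[μ_{ℓ-1}, …, μ_0]; [ν_{ℓ-1}, …, ν_0]] ∈ ℝ^{(n+m)×ℓ}. For each number of rollouts n_r, define the sample averages μ̂_t = (1/n_r) Σ_{k=1}^{n_r} x_t^{(k)}, and Ŷ = [μ̂_ℓ, …, μ̂_1], Ẑ = [[μ̂_{ℓ-1}, …, μ̂_0]; [ν_{ℓ-1}, …, ν_0]]. Then with probability one, as n_r → ∞, Ẑ Ẑ^T is eventually invertible and Ŷ Ẑ^T (Ẑ Ẑ^T)^{-1} converges to [A, B]. -/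
open Matrix MeasureTheory ProbabilityTheory Filter Topology

/-- Consistency of the first-stage least-squares estimator.
The rollouts `x k : Ω → ℕ → Fin n → ℝ` (the `k`-th rollout, evaluated at times
`t = 0, …, ℓ`) are i.i.d. as `ℝ^{n(ℓ+1)}`-valued random vectors with finite second moments,
and the mean trajectory `μ_t = E[x_t]` satisfies `μ_{t+1} = A μ_t + B ν_t`.  If
`Z Zᵀ` is invertible, where `Z = [[μ_{ℓ-1}, …, μ_0]; [ν_{ℓ-1}, …, ν_0]]`, then with
probability one, as the number of rollouts `n_r → ∞`, the sample-average matrix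
`Ẑ Ẑᵀ` is eventually invertible and `Ŷ Ẑᵀ (Ẑ Ẑᵀ)⁻¹ → [A, B]`. -/
theorem first_stage_least_squares_consistent {Ω : Type*} [MeasureSpace Ω]
    [IsProbabilityMeasure (volume : Measure Ω)] {n m ℓ : ℕ}
    (A : Matrix (Fin n) (Fin n) ℝ) (B : Matrix (Fin n) (Fin m) ℝ)
    (ν : ℕ → Fin m → ℝ)
    (x : ℕ → Ω → ℕ → Fin n → ℝ)
    -- the rollouts (x_0^{(k)}, …, x_ℓ^{(k)}), k = 0, 1, 2, …, are i.i.d.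
    (hindep : iIndepFun (m := fun _ : ℕ => (inferInstance : MeasurableSpace (Fin (ℓ + 1) → Fin n → ℝ)))
      (fun k ω => fun t : Fin (ℓ + 1) => x k ω t) volume)
    (hident : ∀ k, IdentDistrib (fun ω => fun t : Fin (ℓ + 1) => x k ω t)
      (fun ω => fun t : Fin (ℓ + 1) => x 0 ω t) volume volume)
    -- finite second moments
    (hL2 : ∀ t ≤ ℓ, ∀ i, MemLp (fun ω => x 0 ω t i) 2)
    -- the mean trajectory and its dynamics
    (μ : ℕ → Fin n → ℝ) (hμ : ∀ t ≤ ℓ, ∀ i, μ t i = ∫ ω, x 0 ω t i)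
    (hdyn : ∀ t < ℓ, μ (t + 1) = A *ᵥ μ t + B *ᵥ ν t)
    (Z : Matrix (Fin n ⊕ Fin m) (Fin ℓ) ℝ)
    (hZ : Z = Matrix.of fun r c =>
      Sum.elim (fun i => μ (c.rev : ℕ) i) (fun j => ν (c.rev : ℕ) j) r)
    (hZZ : IsUnit (Z * Zᵀ))
    -- the sample averages over the first n_r rollouts and the estimator matrices
    (μhat : ℕ → Ω → ℕ → Fin n → ℝ)
    (hμhat : ∀ nr ω t, μhat nr ω t = (nr : ℝ)⁻¹ • ∑ k ∈ Finset.range nr, x k ω t)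
    (Yhat : ℕ → Ω → Matrix (Fin n) (Fin ℓ) ℝ)
    (hYhat : ∀ nr ω, Yhat nr ω = Matrix.of fun i c => μhat nr ω ((c.rev : ℕ) + 1) i)
    (Zhat : ℕ → Ω → Matrix (Fin n ⊕ Fin m) (Fin ℓ) ℝ)
    (hZhat : ∀ nr ω, Zhat nr ω = Matrix.of fun r c =>
      Sum.elim (fun i => μhat nr ω (c.rev : ℕ) i) (fun j => ν (c.rev : ℕ) j) r) :
    ∀ᵐ ω, (∀ᶠ nr in atTop, IsUnit (Zhat nr ω * (Zhat nr ω)ᵀ)) ∧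
      Tendsto (fun nr => Yhat nr ω * (Zhat nr ω)ᵀ * (Zhat nr ω * (Zhat nr ω)ᵀ)⁻¹)
        atTop (nhds (fromCols A B)) := by
  have key : ∀ᵐ ω, ∀ (t : Fin (ℓ + 1)) (i : Fin n),
      Tendsto (fun nr => μhat nr ω t i) atTop (𝓝 (μ t i)) := by
    rw [ae_all_iff]
    intro t
    rw [ae_all_iff]
    intro i
    have ht : (t : ℕ) ≤ ℓ := Nat.lt_succ_iff.mp t.2
    have hg : Measurable (fun v : Fin (ℓ + 1) → Fin n → ℝ => v t i) := by fun_prop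
    have h := strong_law_ae_real (μ := (volume : Measure Ω)) (fun k ω => x k ω t i)
      ((hL2 t ht i).integrable (by norm_num))
      (fun j k hjk => (hindep.indepFun hjk).comp hg hg)
      (fun k => (hident k).comp hg)
    filter_upwards [h] with ω hω
    rw [hμ t ht i]
    refine hω.congr fun nr => ?_
    rw [hμhat]
    simp [Finset.sum_apply, div_eq_inv_mul]
  filter_upwards [key] with ω hω
  have hω' : ∀ t ≤ ℓ, ∀ i, Tendsto (fun nr => μhat nr ω t i) atTop (𝓝 (μ t i)) :=
    fun t ht i => hω ⟨t, Nat.lt_succ_of_le ht⟩ i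
  have hZt : Tendsto (fun nr => Zhat nr ω) atTop (𝓝 Z) := by
    refine tendsto_pi_nhds.2 fun r => tendsto_pi_nhds.2 fun c => ?_
    simp only [hZhat, hZ, Matrix.of_apply]
    cases r with
    | inl i => exact hω' _ c.rev.2.le i
    | inr j => exact tendsto_const_nhds
  have hYt : Tendsto (fun nr => Yhat nr ω) atTop (𝓝 (fromCols A B * Z)) := by
    refine tendsto_pi_nhds.2 fun i => tendsto_pi_nhds.2 fun c => ?_
    have e : (fromCols A B * Z) i c = μ ((c.rev : ℕ) + 1) i := by
      rw [hdyn _ c.rev.2]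
      simp [hZ, Matrix.mul_apply, Matrix.mulVec, dotProduct, Fintype.sum_sum_type]
    rw [e]
    simp only [hYhat, Matrix.of_apply]
    exact hω' _ c.rev.2 i
  have hZT : Tendsto (fun nr => (Zhat nr ω)ᵀ) atTop (𝓝 Zᵀ) :=
    ((continuous_id.matrix_transpose).tendsto Z).comp hZt
  have hG : Tendsto (fun nr => Zhat nr ω * (Zhat nr ω)ᵀ) atTop (𝓝 (Z * Zᵀ)) :=
    ((continuous_id.matrix_mul continuous_id.matrix_transpose).tendsto Z).comp hZt
  have hdet : Tendsto (fun nr => (Zhat nr ω * (Zhat nr ω)ᵀ).det) atTop (𝓝 (Z * Zᵀ).det) :=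
    ((continuous_id.matrix_det).tendsto (Z * Zᵀ)).comp hG
  have hadj : Tendsto (fun nr => (Zhat nr ω * (Zhat nr ω)ᵀ).adjugate) atTop
      (𝓝 (Z * Zᵀ).adjugate) :=
    ((continuous_id.matrix_adjugate).tendsto (Z * Zᵀ)).comp hG
  have hd : IsUnit (Z * Zᵀ).det := (Matrix.isUnit_iff_isUnit_det _).1 hZZ
  have hinv : Tendsto (fun nr => (Zhat nr ω * (Zhat nr ω)ᵀ)⁻¹) atTop (𝓝 (Z * Zᵀ)⁻¹) := by
    simp only [Matrix.inv_def, Ring.inverse_eq_inv']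
    exact (hdet.inv₀ hd.ne_zero).smul hadj
  constructor
  · filter_upwards [hdet.eventually_ne hd.ne_zero] with nr h
    exact (Matrix.isUnit_iff_isUnit_det _).2 (isUnit_iff_ne_zero.2 h)
  · have hlim : fromCols A B * Z * Zᵀ * (Z * Zᵀ)⁻¹ = fromCols A B := by
      rw [Matrix.mul_assoc (fromCols A B) Z, Matrix.mul_nonsing_inv_cancel_right _ _ hd]
    have h1 : Tendsto (fun nr => Yhat nr ω * (Zhat nr ω)ᵀ) atTop (𝓝 (fromCols A B * Z * Zᵀ)) :=
      ((continuous_fst.matrix_mul continuous_snd).tendsto (fromCols A B * Z, Zᵀ)).comp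
        (hYt.prodMk_nhds hZT)
    have h2 := ((continuous_fst.matrix_mul continuous_snd).tendsto
      (fromCols A B * Z * Zᵀ, (Z * Zᵀ)⁻¹)).comp (h1.prodMk_nhds hinv)
    simp only [hlim] at h2
    exact h2
end

section
/- Consistency of the second-stage least-squares estimator: Let A ∈ ℝ^{n×n}, B ∈ ℝ^{n×m}, à = P_1(A ⊗ A)Q_1, B̃ = P_1(B ⊗ B)Q_2, K_{BA} = P_1(B ⊗ A), K_{AB} = P_1(A ⊗ B), and let Σ̃_A' ∈ ℝ^{N×N}, Σ̃_B' ∈ ℝ^{N×M} with N = n(n+1)/2, M = m(m+1)/2. Fix inputs ν_0, …, ν_{ℓ-1} ∈ ℝ^m and Ū_0, …, Ū_{ℓ-1} ∈ ℝ^{m×m} symmetric, and set U_t = P_2 vec(Ū_t + ν_t ν_t^T). Let (x_0^{(k)}, …, x_ℓ^{(k)}), k = 1, 2, 3, …, be an i.i.d. sequence of ℝ^{n(ℓ+1)}-valued random vectors with E‖x_t^{(1)}‖² < ∞ for all 0 ≤ t ≤ ℓ, such that the moments μ_t := E[x_t^{(1)}], X_t := P_1 vec(E[x_t^{(1)} (x_t^{(1)})^T]),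 W_t := vec(μ_t ν_t^T), W_t' := vec(ν_t μ_t^T) satisfy μ_{t+1} = A μ_t + B ν_t and X_{t+1} = (à + Σ̃_A') X_t + (B̃ + Σ̃_B') U_t + K_{BA} W_t + K_{AB} W_t' for 0 ≤ t ≤ ℓ-1. Suppose Z Z^T and D D^T are invertible, where Z = [[μ_{ℓ-1}, …, μ_0]; [ν_{ℓ-1}, …, ν_0]] and D = [[X_{ℓ-1}, …, X_0]; [U_{ℓ-1}, …, U_0]]. For each n_r define μ̂_t = (1/n_r) Σ_{k=1}^{n_r} x_t^{(k)}, X̂_t = P_1 vec((1/n_r) Σ_{k=1}^{n_r} x_t^{(k)} (x_t^{(k)})^T), Ŵ_t = vec(μ̂_t ν_t^T), Ŵ_t' = vec(ν_t μ̂_t^T); let [Â, B̂] = Ŷ Ẑ^T (Ẑ Ẑ^T)^{-1} (zero matrix if Ẑ Ẑ^T is singular) with Ŷ, Ẑ built from μ̂_t and ν_t as in the first stage; set Ã̂ = P_1(Â ⊗ Â)Q_1, B̂̃ = P_1(B̂ ⊗ B̂)Q_2, K̂_{BA} = P_1(B̂ ⊗ Â), K̂_{AB} = P_1(Â ⊗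 B̂), Ĉ_t = X̂_t − [Ã̂ X̂_{t-1} + K̂_{BA} Ŵ_{t-1} + K̂_{AB} Ŵ_{t-1}' + B̂̃ U_{t-1}], Ĉ = [Ĉ_ℓ, …, Ĉ_1], D̂ = [[X̂_{ℓ-1}, …, X̂_0]; [U_{ℓ-1}, …, U_0]]. Then with probability one, as n_r → ∞, D̂ D̂^T is eventually invertible and Ĉ D̂^T (D̂ D̂^T)^{-1} converges to [Σ̃_A', Σ̃_B']. -/
open Matrix MeasureTheory ProbabilityTheory Filter Topology
open scoped Kronecker

/-- Column-wise vectorization of a `p × q` matrix: the pair `(j, i)` plays the role of the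
linear index `(j-1)p + i`, so `vecM M (j, i) = M i j`. -/
def vecM {p q : ℕ} (M : Matrix (Fin p) (Fin q) ℝ) : Fin q × Fin p → ℝ :=
  fun ji => M ji.2 ji.1

/-- Sorting of a pair index: the index `(j-1)n + i` with `i < j` (the pair `(j, i)`) is sent
to `(i-1)n + j` (the pair `(i, j)`); other indices are unchanged. -/
def sortPair {n : ℕ} (p : Fin n × Fin n) : Fin n × Fin n :=
  if p.2 < p.1 then p.swap else p

/-- The retained indices `(i-1)n + j`, `i ≤ j`: pairs `(i, j)` with `i ≤ j`. -/
abbrev SymIdx (n : ℕ) := {p : Fin n × Fin n // p.1 ≤ p.2}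

/-- `P ∈ ℝ^{[n(n+1)/2] × n²}` (this is `P₁` for size `n` and `P₂` for size `m`): the identity
`I_{n²}` with the rows of index `(j-1)n + i`, `i < j`, removed. -/
def Pmat (n : ℕ) : Matrix (SymIdx n) (Fin n × Fin n) ℝ :=
  Matrix.of fun s q => if s.val = q then (1 : ℝ) else 0

/-- `Q ∈ ℝ^{n² × [n(n+1)/2]}` (this is `Q₁` for size `n` and `Q₂` for size `m`): the matrix
`T` (the identity `I_{n²}` whose `((j-1)n+i)`-th row, `i < j`, is replaced by
`e_{(i-1)n+j}ᵀ`) with the columns of index `(j-1)n + i`, `i < j`, removed. -/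
def Qmat (n : ℕ) : Matrix (Fin n × Fin n) (SymIdx n) ℝ :=
  Matrix.of fun q s => if sortPair q = s.val then (1 : ℝ) else 0


lemma aux_tmul {α : Type*} {l : Filter α} {p q r : Type*} [Fintype q]
    {F : α → Matrix p q ℝ} {G : α → Matrix q r ℝ} {F0 : Matrix p q ℝ} {G0 : Matrix q r ℝ}
    (hF : Tendsto F l (𝓝 F0)) (hG : Tendsto G l (𝓝 G0)) :
    Tendsto (fun a => F a * G a) l (𝓝 (F0 * G0)) := by
  have hc : Continuous (fun z : Matrix p q ℝ × Matrix q r ℝ => z.1 * z.2) :=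
    continuous_fst.matrix_mul continuous_snd
  exact (hc.tendsto (F0, G0)).comp (hF.prodMk_nhds hG)

lemma aux_tmulVec {α : Type*} {l : Filter α} {p q : Type*} [Fintype q]
    {F : α → Matrix p q ℝ} {G : α → q → ℝ} {F0 : Matrix p q ℝ} {G0 : q → ℝ}
    (hF : Tendsto F l (𝓝 F0)) (hG : Tendsto G l (𝓝 G0)) :
    Tendsto (fun a => F a *ᵥ G a) l (𝓝 (F0 *ᵥ G0)) := by
  have hc : Continuous (fun z : Matrix p q ℝ × (q → ℝ) => z.1 *ᵥ z.2) :=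
    continuous_fst.matrix_mulVec continuous_snd
  exact (hc.tendsto (F0, G0)).comp (hF.prodMk_nhds hG)

lemma aux_tentry {α : Type*} {l : Filter α} {p q : Type*}
    {F : α → Matrix p q ℝ} {F0 : Matrix p q ℝ} :
    Tendsto F l (𝓝 F0) ↔ ∀ i j, Tendsto (fun a => F a i j) l (𝓝 (F0 i j)) := by
  constructor
  · intro h i j
    exact tendsto_pi_nhds.1 (tendsto_pi_nhds.1 h i) j
  · intro h
    exact tendsto_pi_nhds.2 fun i => tendsto_pi_nhds.2 fun j => h i j

lemma aux_tkron {α : Type*} {l : Filter α} {p q r s : Type*}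
    {F : α → Matrix p q ℝ} {G : α → Matrix r s ℝ} {F0 : Matrix p q ℝ} {G0 : Matrix r s ℝ}
    (hF : Tendsto F l (𝓝 F0)) (hG : Tendsto G l (𝓝 G0)) :
    Tendsto (fun a => F a ⊗ₖ G a) l (𝓝 (F0 ⊗ₖ G0)) := by
  rw [aux_tentry] at *
  intro i j
  exact (hF i.1 j.1).mul (hG i.2 j.2)

lemma aux_ttrans {α : Type*} {l : Filter α} {p q : Type*}
    {F : α → Matrix p q ℝ} {F0 : Matrix p q ℝ} (hF : Tendsto F l (𝓝 F0)) :
    Tendsto (fun a => (F a)ᵀ) l (𝓝 F0ᵀ) := by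
  rw [aux_tentry] at *
  intro i j
  exact hF j i

lemma aux_tinv {α : Type*} {l : Filter α} {p : Type*} [Fintype p] [DecidableEq p]
    {F : α → Matrix p p ℝ} {F0 : Matrix p p ℝ} (hF : Tendsto F l (𝓝 F0)) (h0 : IsUnit F0) :
    (∀ᶠ a in l, IsUnit (F a)) ∧ Tendsto (fun a => (F a)⁻¹) l (𝓝 F0⁻¹) := by
  have hdc : Continuous (fun M : Matrix p p ℝ => M.det) := continuous_id.matrix_det
  have hac : Continuous (fun M : Matrix p p ℝ => M.adjugate) := continuous_id.matrix_adjugate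
  have hd : Tendsto (fun a => (F a).det) l (𝓝 F0.det) := (hdc.tendsto F0).comp hF
  have ha : Tendsto (fun a => (F a).adjugate) l (𝓝 F0.adjugate) := (hac.tendsto F0).comp hF
  have hne : F0.det ≠ 0 := ((Matrix.isUnit_iff_isUnit_det F0).1 h0).ne_zero
  constructor
  · filter_upwards [hd.eventually_ne hne] with a h
    exact (Matrix.isUnit_iff_isUnit_det _).2 (isUnit_iff_ne_zero.2 h)
  · simp only [Matrix.inv_def, Ring.inverse_eq_inv']
    exact (hd.inv₀ hne).smul ha

/-- The least-squares estimator from converging data. -/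
lemma aux_ls {α : Type*} {l : Filter α} {p q r : Type*} [Fintype q] [Fintype r] [DecidableEq q]
    {Y : α → Matrix p r ℝ} {Y0 : Matrix p r ℝ} {Z : α → Matrix q r ℝ} {Z0 : Matrix q r ℝ}
    {S : Matrix p q ℝ}
    (hY : Tendsto Y l (𝓝 Y0)) (hZ : Tendsto Z l (𝓝 Z0)) (h0 : IsUnit (Z0 * Z0ᵀ))
    (hS : Y0 = S * Z0) :
    (∀ᶠ a in l, IsUnit (Z a * (Z a)ᵀ)) ∧
      Tendsto (fun a => Y a * (Z a)ᵀ * (Z a * (Z a)ᵀ)⁻¹) l (𝓝 S) := by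
  have hG := aux_tinv (aux_tmul hZ (aux_ttrans hZ)) h0
  refine ⟨hG.1, ?_⟩
  have h := aux_tmul (aux_tmul hY (aux_ttrans hZ)) hG.2
  have e : Y0 * Z0ᵀ * (Z0 * Z0ᵀ)⁻¹ = S := by
    rw [hS, Matrix.mul_assoc S, Matrix.mul_assoc S,
      Matrix.mul_nonsing_inv _ ((Matrix.isUnit_iff_isUnit_det _).1 h0), Matrix.mul_one]
  rwa [e] at h

lemma aux_slln {Ω : Type*} [MeasureSpace Ω] {E : Type*} [MeasurableSpace E]
    (y : ℕ → Ω → E) (hindep : iIndepFun y (volume : Measure Ω))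
    (hident : ∀ k, IdentDistrib (y k) (y 0) (volume : Measure Ω) volume)
    (g : E → ℝ) (hg : Measurable g) (hi : Integrable (fun ω => g (y 0 ω))) :
    ∀ᵐ ω, Tendsto (fun nr : ℕ => (nr : ℝ)⁻¹ * ∑ k ∈ Finset.range nr, g (y k ω)) atTop
      (𝓝 (∫ ω, g (y 0 ω))) := by
  have h := strong_law_ae_real (fun k ω => g (y k ω)) hi
    (fun i j hij => (hindep.indepFun hij).comp hg hg) (fun k => (hident k).comp hg)
  filter_upwards [h] with ω hω
  refine hω.congr fun nr => ?_
  rw [div_eq_inv_mul]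

/-- Consistency of the second-stage least-squares estimator for the simplified noise
covariance matrices `Σ̃_A', Σ̃_B'` of a linear system with multiplicative noise. -/
theorem second_stage_least_squares_consistent {Ω : Type*} [MeasureSpace Ω]
    [IsProbabilityMeasure (volume : Measure Ω)] {n m ℓ : ℕ}
    (A : Matrix (Fin n) (Fin n) ℝ) (B : Matrix (Fin n) (Fin m) ℝ)
    (SigAt : Matrix (SymIdx n) (SymIdx n) ℝ) (SigBt : Matrix (SymIdx n) (SymIdx m) ℝ)
    -- fixed inputs: means ν_t and symmetric second-moment parts Ū_t,
    -- with U_t = P₂ vec(Ū_t + ν_t ν_tᵀ)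
    (ν : ℕ → Fin m → ℝ) (Ubar : ℕ → Matrix (Fin m) (Fin m) ℝ)
    (hUbar : ∀ t, (Ubar t).IsSymm)
    (U : ℕ → SymIdx m → ℝ)
    (hU : ∀ t, U t = Pmat m *ᵥ vecM (Ubar t + vecMulVec (ν t) (ν t)))
    -- i.i.d. rollouts (x_0^{(k)}, …, x_ℓ^{(k)}) with finite second moments
    (x : ℕ → Ω → ℕ → Fin n → ℝ)
    (hindep : iIndepFun (m := fun _ : ℕ => (inferInstance : MeasurableSpace (Fin (ℓ + 1) → Fin n → ℝ)))
      (fun k ω => fun t : Fin (ℓ + 1) => x k ω t) volume)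
    (hident : ∀ k, IdentDistrib (fun ω => fun t : Fin (ℓ + 1) => x k ω t)
      (fun ω => fun t : Fin (ℓ + 1) => x 0 ω t) volume volume)
    (hL2 : ∀ t ≤ ℓ, ∀ i, MemLp (fun ω => x 0 ω t i) 2)
    -- the exact moments μ_t = E[x_t], X_t = P₁ vec(E[x_t x_tᵀ]) and their dynamics,
    -- with W_t = vec(μ_t ν_tᵀ) and W_t' = vec(ν_t μ_tᵀ)
    (μ : ℕ → Fin n → ℝ) (hμ : ∀ t ≤ ℓ, ∀ i, μ t i = ∫ ω, x 0 ω t i)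
    (Xm : ℕ → SymIdx n → ℝ)
    (hXm : ∀ t ≤ ℓ, Xm t =
      Pmat n *ᵥ fun p : Fin n × Fin n => ∫ ω, x 0 ω t p.2 * x 0 ω t p.1)
    (hdyn1 : ∀ t < ℓ, μ (t + 1) = A *ᵥ μ t + B *ᵥ ν t)
    (hdyn2 : ∀ t < ℓ, Xm (t + 1) =
      (Pmat n * (A ⊗ₖ A) * Qmat n + SigAt) *ᵥ Xm t +
        (Pmat n * (B ⊗ₖ B) * Qmat m + SigBt) *ᵥ U t +
        (Pmat n * (B ⊗ₖ A)) *ᵥ (fun p : Fin m × Fin n => μ t p.2 * ν t p.1) +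
        (Pmat n * (A ⊗ₖ B)) *ᵥ (fun p : Fin n × Fin m => ν t p.2 * μ t p.1))
    -- invertibility of the exact Gram matrices Z Zᵀ and D Dᵀ
    (Z : Matrix (Fin n ⊕ Fin m) (Fin ℓ) ℝ)
    (hZ : Z = Matrix.of fun r c =>
      Sum.elim (fun i => μ (c.rev : ℕ) i) (fun j => ν (c.rev : ℕ) j) r)
    (hZZ : IsUnit (Z * Zᵀ))
    (D : Matrix (SymIdx n ⊕ SymIdx m) (Fin ℓ) ℝ)
    (hD : D = Matrix.of fun r c =>
      Sum.elim (fun s => Xm (c.rev : ℕ) s) (fun s => U (c.rev : ℕ) s) r)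
    (hDD : IsUnit (D * Dᵀ))
    -- sample averages over the first n_r rollouts
    (μhat : ℕ → Ω → ℕ → Fin n → ℝ)
    (hμhat : ∀ nr ω t, μhat nr ω t = (nr : ℝ)⁻¹ • ∑ k ∈ Finset.range nr, x k ω t)
    (Xhat : ℕ → Ω → ℕ → SymIdx n → ℝ)
    (hXhat : ∀ nr ω t, Xhat nr ω t = Pmat n *ᵥ fun p : Fin n × Fin n =>
      (nr : ℝ)⁻¹ * ∑ k ∈ Finset.range nr, x k ω t p.2 * x k ω t p.1)
    -- the first-stage estimator [Â, B̂] = Ŷ Ẑᵀ (Ẑ Ẑᵀ)⁻¹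
    -- (`Matrix.inv` is the zero matrix when `Ẑ Ẑᵀ` is singular)
    (Yhat : ℕ → Ω → Matrix (Fin n) (Fin ℓ) ℝ)
    (hYhat : ∀ nr ω, Yhat nr ω = Matrix.of fun i c => μhat nr ω ((c.rev : ℕ) + 1) i)
    (Zhat : ℕ → Ω → Matrix (Fin n ⊕ Fin m) (Fin ℓ) ℝ)
    (hZhat : ∀ nr ω, Zhat nr ω = Matrix.of fun r c =>
      Sum.elim (fun i => μhat nr ω (c.rev : ℕ) i) (fun j => ν (c.rev : ℕ) j) r)
    (Ahat : ℕ → Ω → Matrix (Fin n) (Fin n) ℝ) (Bhat : ℕ → Ω → Matrix (Fin n) (Fin m) ℝ)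
    (hABhat : ∀ nr ω, fromCols (Ahat nr ω) (Bhat nr ω) =
      Yhat nr ω * (Zhat nr ω)ᵀ * (Zhat nr ω * (Zhat nr ω)ᵀ)⁻¹)
    -- the second-stage residual and data matrices Ĉ and D̂, with
    -- Ŵ_t = vec(μ̂_t ν_tᵀ) and Ŵ_t' = vec(ν_t μ̂_tᵀ)
    (Chat : ℕ → Ω → Matrix (SymIdx n) (Fin ℓ) ℝ)
    (hChat : ∀ nr ω, Chat nr ω = Matrix.of fun i c =>
      (Xhat nr ω ((c.rev : ℕ) + 1) -
        ((Pmat n * (Ahat nr ω ⊗ₖ Ahat nr ω) * Qmat n) *ᵥ Xhat nr ω (c.rev : ℕ) +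
          (Pmat n * (Bhat nr ω ⊗ₖ Ahat nr ω)) *ᵥ
            (fun p : Fin m × Fin n => μhat nr ω (c.rev : ℕ) p.2 * ν (c.rev : ℕ) p.1) +
          (Pmat n * (Ahat nr ω ⊗ₖ Bhat nr ω)) *ᵥ
            (fun p : Fin n × Fin m => ν (c.rev : ℕ) p.2 * μhat nr ω (c.rev : ℕ) p.1) +
          (Pmat n * (Bhat nr ω ⊗ₖ Bhat nr ω) * Qmat m) *ᵥ U (c.rev : ℕ))) i)
    (Dhat : ℕ → Ω → Matrix (SymIdx n ⊕ SymIdx m) (Fin ℓ) ℝ)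
    (hDhat : ∀ nr ω, Dhat nr ω = Matrix.of fun r c =>
      Sum.elim (fun s => Xhat nr ω (c.rev : ℕ) s) (fun s => U (c.rev : ℕ) s) r) :
    -- conclusion: eventual invertibility of D̂ D̂ᵀ and convergence of the estimator
    ∀ᵐ ω, (∀ᶠ nr in atTop, IsUnit (Dhat nr ω * (Dhat nr ω)ᵀ)) ∧
      Tendsto (fun nr => Chat nr ω * (Dhat nr ω)ᵀ * (Dhat nr ω * (Dhat nr ω)ᵀ)⁻¹)
        atTop (nhds (fromCols SigAt SigBt)) := by
  have hm1 : ∀ᵐ ω, ∀ (t : Fin (ℓ + 1)) (i : Fin n),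
      Tendsto (fun nr : ℕ => (nr : ℝ)⁻¹ * ∑ k ∈ Finset.range nr, x k ω t i) atTop
        (𝓝 (∫ ω, x 0 ω t i)) := by
    rw [ae_all_iff]; intro t
    rw [ae_all_iff]; intro i
    exact aux_slln (fun k ω => fun t : Fin (ℓ + 1) => x k ω t) hindep hident
      (fun z => z t i) (by fun_prop)
      ((hL2 t (by omega) i).integrable (by norm_num))
  have hm2 : ∀ᵐ ω, ∀ (t : Fin (ℓ + 1)) (p : Fin n × Fin n),
      Tendsto (fun nr : ℕ => (nr : ℝ)⁻¹ * ∑ k ∈ Finset.range nr, x k ω t p.2 * x k ω t p.1)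
        atTop (𝓝 (∫ ω, x 0 ω t p.2 * x 0 ω t p.1)) := by
    rw [ae_all_iff]; intro t
    rw [ae_all_iff]; intro p
    exact aux_slln (fun k ω => fun t : Fin (ℓ + 1) => x k ω t) hindep hident
      (fun z => z t p.2 * z t p.1) (by fun_prop)
      ((hL2 t (by omega) p.2).integrable_mul (hL2 t (by omega) p.1))
  filter_upwards [hm1, hm2] with ω h1 h2
  have tμ : ∀ t ≤ ℓ, Tendsto (fun nr => μhat nr ω t) atTop (𝓝 (μ t)) := by
    intro t ht
    refine tendsto_pi_nhds.2 fun i => ?_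
    rw [hμ t ht i]
    refine (h1 ⟨t, by omega⟩ i).congr fun nr => ?_
    simp [hμhat]
  have tX : ∀ t ≤ ℓ, Tendsto (fun nr => Xhat nr ω t) atTop (𝓝 (Xm t)) := by
    intro t ht
    rw [hXm t ht]
    simp only [hXhat]
    exact aux_tmulVec tendsto_const_nhds (tendsto_pi_nhds.2 fun p => h2 ⟨t, by omega⟩ p)
  have tZ : Tendsto (fun nr => Zhat nr ω) atTop (𝓝 Z) := by
    rw [aux_tentry]
    rintro (i | j) c
    · simp only [hZhat, hZ, Matrix.of_apply, Sum.elim_inl]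
      exact tendsto_pi_nhds.1 (tμ _ (by omega)) i
    · simp only [hZhat, hZ, Matrix.of_apply, Sum.elim_inr]
      exact tendsto_const_nhds
  have tD : Tendsto (fun nr => Dhat nr ω) atTop (𝓝 D) := by
    rw [aux_tentry]
    rintro (i | j) c
    · simp only [hDhat, hD, Matrix.of_apply, Sum.elim_inl]
      exact tendsto_pi_nhds.1 (tX _ (by omega)) i
    · simp only [hDhat, hD, Matrix.of_apply, Sum.elim_inr]
      exact tendsto_const_nhds
  have tY : Tendsto (fun nr => Yhat nr ω) atTop
      (𝓝 (Matrix.of fun i (c : Fin ℓ) => μ ((c.rev : ℕ) + 1) i)) := by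
    rw [aux_tentry]
    intro i c
    simp only [hYhat, Matrix.of_apply]
    exact tendsto_pi_nhds.1 (tμ _ (by omega)) i
  have tAB := (aux_ls (S := fromCols A B) tY tZ hZZ (by
    ext i c
    rw [Matrix.of_apply, hdyn1 _ (by omega), hZ]
    simp [Matrix.mul_apply, Matrix.mulVec, dotProduct, Fintype.sum_sum_type])).2
  simp only [← hABhat] at tAB
  rw [aux_tentry] at tAB
  have tA : Tendsto (fun nr => Ahat nr ω) atTop (𝓝 A) :=
    aux_tentry.2 fun i j => by simpa using tAB i (Sum.inl j)
  have tB : Tendsto (fun nr => Bhat nr ω) atTop (𝓝 B) :=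
    aux_tentry.2 fun i j => by simpa using tAB i (Sum.inr j)
  have tC : Tendsto (fun nr => Chat nr ω) atTop (𝓝 (fromCols SigAt SigBt * D)) := by
    rw [aux_tentry]
    intro i c
    simp only [hChat, Matrix.of_apply]
    have hc : (c.rev : ℕ) < ℓ := c.rev.isLt
    have tw : Tendsto (fun nr => (fun p : Fin m × Fin n =>
        μhat nr ω (c.rev : ℕ) p.2 * ν (c.rev : ℕ) p.1)) atTop
        (𝓝 (fun p : Fin m × Fin n => μ (c.rev : ℕ) p.2 * ν (c.rev : ℕ) p.1)) :=
      tendsto_pi_nhds.2 fun p => (tendsto_pi_nhds.1 (tμ _ hc.le) p.2).mul tendsto_const_nhds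
    have tw' : Tendsto (fun nr => (fun p : Fin n × Fin m =>
        ν (c.rev : ℕ) p.2 * μhat nr ω (c.rev : ℕ) p.1)) atTop
        (𝓝 (fun p : Fin n × Fin m => ν (c.rev : ℕ) p.2 * μ (c.rev : ℕ) p.1)) :=
      tendsto_pi_nhds.2 fun p => tendsto_const_nhds.mul (tendsto_pi_nhds.1 (tμ _ hc.le) p.1)
    have cP : Tendsto (fun _ : ℕ => Pmat n) atTop (𝓝 (Pmat n)) := tendsto_const_nhds
    have h := (tX _ hc).sub ((((aux_tmulVec (aux_tmul (aux_tmul cP (aux_tkron tA tA))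
      (tendsto_const_nhds (x := Qmat n))) (tX _ hc.le)).add
      (aux_tmulVec (aux_tmul cP (aux_tkron tB tA)) tw)).add
      (aux_tmulVec (aux_tmul cP (aux_tkron tA tB)) tw')).add
      (aux_tmulVec (aux_tmul (aux_tmul cP (aux_tkron tB tB))
      (tendsto_const_nhds (x := Qmat m))) (tendsto_const_nhds (x := U (c.rev : ℕ)))))
    have h' := tendsto_pi_nhds.1 h i
    convert h' using 2
    have e : (fromCols SigAt SigBt * D) i c
        = (SigAt *ᵥ Xm (c.rev : ℕ)) i + (SigBt *ᵥ U (c.rev : ℕ)) i := by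
      rw [hD]
      simp [Matrix.mul_apply, Matrix.mulVec, dotProduct, Fintype.sum_sum_type]
    rw [e]
    have hd := congrFun (hdyn2 _ hc) i
    simp only [Matrix.add_mulVec, Pi.add_apply, Pi.sub_apply] at hd ⊢
    rw [hd]
    ring
  exact aux_ls tC tD hDD rfl
end
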